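/- Let ε > 0 be fixed, let p > 2 be a fixed prime, and let Φ : ℝ → ℝ be a nonnegative Schwartz-class function. For each n ∈ ℕ set q := pⁿ, and let α₁(n), α₂(n), α₃(n) be integers coprime to p (allowed to vary with n) satisfying p > s_p(α₁(n),α₂(n),α₃(n)) for every n. Let N = N(n) be any real number with N ≥ q^{11/18+ε}. Then, as n → ∞, the difference (q/N³) · Σ_{(x₁,x₂,x₃) ∈ ℤ³, gcd(x₁x₂x₃,p)=1, α₁(n)x₁²+α₂(n)x₂²+α₃(n)x₃² ≡ 0 (mod q)} Φ(x₁/N)Φ(x₂/N)Φ(x₃/N) − Φ̂(0)³ · C_p(α₁(n),α₂(n),α₃(n)) tends to 0. -/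

import Mathlib

open Filter MeasureTheory

/-!
Write `q = p ^ n`. Poisson summation in residue classes turns the smoothed count into
`(N / q) ^ 3 * ∑ m, Φ̂(m₁ N / q) Φ̂(m₂ N / q) Φ̂(m₃ N / q) E(m)`, where `E(m)` is the exponential
sum of frequency `m` over the unit solutions modulo `q`. The frequency `m = 0` gives the main term:
unit solutions are counted over `𝔽_p` by a Jacobi sum for the conic and lifted by Hensel's lemma.

For `m ≠ 0`, averaging over a shear of the solution set leaves only the critical points in `E(m)`.
Hence `E(m) = 0` unless the adjoint form is divisible by `p ^ (n - 1)` at `m`, and otherwise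
`|E(p ^ j m')| ≲ q ^ (3 / 2) p ^ j` for `m'` not divisible by `p`. It remains to see that the
adjoint congruence modulo `p ^ (2 r)` has essentially at most `A` primitive solutions of height at
most `A`, as long as `A` is slightly smaller than `p ^ r`. Split these solutions by their projective
class modulo a smaller power `p ^ s`. Within a class the Gram matrix is so divisible by `p` that the
determinant of any three solutions vanishes; they lie in one plane, whose primitive normal is a
smaller solution of an adjoint congruence and is shared by at most two classes. Counting the lattice
points in these planes and summing over the normals closes an induction on the height.
-/

open Matrix
open scoped SchwartzMap FourierTransform

section Height

variable {ι : Type*} [Fintype ι]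

/-- The height of an integer vector: its sup norm, as a natural number. -/
def height (x : ι → ℤ) : ℕ := Finset.univ.sup fun i => (x i).natAbs

lemma natAbs_le_height (x : ι → ℤ) (i : ι) : (x i).natAbs ≤ height x :=
  Finset.le_sup (f := fun i => (x i).natAbs) (Finset.mem_univ i)

lemma abs_le_height (x : ι → ℤ) (i : ι) : |x i| ≤ height x := by
  rw [Int.abs_eq_natAbs]
  exact_mod_cast natAbs_le_height x i

lemma exists_natAbs_eq_height [Nonempty ι] (x : ι → ℤ) : ∃ i, (x i).natAbs = height x := by
  obtain ⟨i, -, hi⟩ := Finset.exists_mem_eq_sup Finset.univ Finset.univ_nonempty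
    (fun i => (x i).natAbs)
  exact ⟨i, hi.symm⟩

lemma height_le_iff {x : ι → ℤ} {M : ℕ} : height x ≤ M ↔ ∀ i, (x i).natAbs ≤ M := by
  simp only [height, Finset.sup_le_iff, Finset.mem_univ, forall_const]

lemma height_eq_zero {x : ι → ℤ} : height x = 0 ↔ x = 0 := by
  rw [← Nat.le_zero, height_le_iff, funext_iff]
  simp only [Nat.le_zero, Int.natAbs_eq_zero, Pi.zero_apply]

lemma height_pos {x : ι → ℤ} : 0 < height x ↔ x ≠ 0 := by
  rw [Nat.pos_iff_ne_zero, Ne, height_eq_zero]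

lemma height_smul (t : ℤ) (x : ι → ℤ) : height (t • x) = t.natAbs * height x := by
  simp only [height, Pi.smul_apply, smul_eq_mul, Int.natAbs_mul]
  exact (Finset.apply_sup_eq_sup_comp_of_linearOrder (t.natAbs * ·)
    (fun _ _ h => Nat.mul_le_mul_left _ h) (mul_zero _)).symm

end Height

section Primitive

variable {ι R : Type*} [Fintype ι]

/-- Primitive (unimodular) vectors: those whose entries generate the unit ideal, in Bézout form. -/
def IsPrimVec [CommSemiring R] (x : ι → R) : Prop := ∃ h : ι → R, h ⬝ᵥ x = 1

namespace IsPrimVec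

lemma ne_zero [CommSemiring R] [Nontrivial R] {x : ι → R} (hx : IsPrimVec x) : x ≠ 0 := by
  rintro rfl
  obtain ⟨h, hh⟩ := hx
  exact zero_ne_one ((dotProduct_zero h).symm.trans hh)

lemma exists_not_dvd [CommSemiring R] {x : ι → R} (hx : IsPrimVec x) {p : R} (hp : ¬ IsUnit p) :
    ∃ i, ¬ p ∣ x i := by
  by_contra! hdvd
  obtain ⟨h, hh⟩ := hx
  refine hp (isUnit_iff_dvd_one.2 (hh ▸ ?_))
  exact Finset.dvd_sum fun i _ => (hdvd i).mul_left _

end IsPrimVec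

lemma exists_eq_smul_isPrimVec [CommRing R] [IsDomain R] [IsPrincipalIdealRing R] {x : ι → R}
    (hx : x ≠ 0) : ∃ (t : R) (y : ι → R), IsPrimVec y ∧ x = t • y := by
  obtain ⟨t, ht⟩ := (IsPrincipalIdealRing.principal (Ideal.span (Set.range x))).principal
  rw [Ideal.submodule_span_eq] at ht
  have hdvd (i : ι) : t ∣ x i := by
    rw [← Ideal.mem_span_singleton, ← ht]
    exact Ideal.subset_span ⟨i, rfl⟩
  choose y hy using hdvd
  have hxy : x = t • y := funext hy
  obtain ⟨c, hc⟩ := Ideal.mem_span_range_iff_exists_fun.1 (ht ▸ Ideal.mem_span_singleton_self t)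
  have ht0 : t ≠ 0 := fun h => hx (by rw [hxy, h, zero_smul])
  refine ⟨t, y, ⟨c, mul_left_cancel₀ ht0 ?_⟩, hxy⟩
  rw [mul_one, ← smul_eq_mul, ← dotProduct_smul, ← hxy]
  exact hc

lemma exists_pos_smul_isPrimVec {x : ι → ℤ} (hx : x ≠ 0) :
    ∃ (t : ℕ) (y : ι → ℤ), 0 < t ∧ IsPrimVec y ∧ x = (t : ℤ) • y := by
  obtain ⟨t, y, ⟨h, hy⟩, rfl⟩ := exists_eq_smul_isPrimVec hx
  have ht : t ≠ 0 := fun h => hx (by rw [h, zero_smul])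
  rcases Int.natAbs_eq t with h' | h'
  · exact ⟨t.natAbs, y, Int.natAbs_pos.2 ht, ⟨h, hy⟩, by rw [← h']⟩
  · refine ⟨t.natAbs, -y, Int.natAbs_pos.2 ht, ⟨-h, by rwa [neg_dotProduct_neg]⟩, ?_⟩
    rw [smul_neg, ← neg_smul, ← h']

end Primitive

section CrossProduct

variable {R : Type*} [CommRing R]

lemma forall_cross_mem_iff (I : AddSubgroup R) (x y : Fin 3 → R) :
    (∀ i, (x ⨯₃ y) i ∈ I) ↔ ∀ u v, x u * y v - x v * y u ∈ I := by
  have swap (u v : Fin 3) (h : x v * y u - x u * y v ∈ I) : x u * y v - x v * y u ∈ I :=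
    neg_sub (x v * y u) _ ▸ I.neg_mem h
  have diag (u : Fin 3) : x u * y u - x u * y u ∈ I := (sub_self (x u * y u)).symm ▸ I.zero_mem
  constructor
  · intro h u v
    have h0 : x 1 * y 2 - x 2 * y 1 ∈ I := h 0
    have h1 : x 2 * y 0 - x 0 * y 2 ∈ I := h 1
    have h2 : x 0 * y 1 - x 1 * y 0 ∈ I := h 2
    fin_cases u <;> fin_cases v <;> first | exact diag _ | assumption | exact swap _ _ ‹_›
  · intro h i
    fin_cases i <;> exact h _ _

lemma forall_dvd_cross_iff {P : R} {x y : Fin 3 → R} :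
    (∀ i, P ∣ (x ⨯₃ y) i) ↔ ∀ u v, P ∣ x u * y v - x v * y u := by
  simpa only [Submodule.mem_toAddSubgroup, Ideal.mem_span_singleton] using
    forall_cross_mem_iff (Submodule.toAddSubgroup (Ideal.span {P})) x y

lemma cross_eq_zero_iff {x y : Fin 3 → R} : x ⨯₃ y = 0 ↔ ∀ u v, x u * y v = x v * y u := by
  simpa only [AddSubgroup.mem_bot, sub_eq_zero, funext_iff, Pi.zero_apply] using
    forall_cross_mem_iff ⊥ x y

lemma cross_cross_cross (x y z : Fin 3 → R) :
    (x ⨯₃ y) ⨯₃ (x ⨯₃ z) = (x ⬝ᵥ (y ⨯₃ z)) • x := by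
  rw [cross_cross_eq_smul_sub_smul, dot_self_cross, zero_smul, zero_sub, ← neg_smul,
    triple_product_permutation y x z, ← cross_anticomm y z, dotProduct_neg, neg_neg]

lemma eq_smul_of_cross_eq_zero {x y h : Fin 3 → R} (hx : h ⬝ᵥ x = 1) (hxy : x ⨯₃ y = 0) :
    y = (h ⬝ᵥ y) • x := by
  have key := cross_cross_eq_smul_sub_smul' h x y
  rw [hxy, map_zero, dotProduct_comm x h, hx, one_smul] at key
  exact (sub_eq_zero.1 key.symm).symm

lemma eq_zero_of_cross_eq_zero_of_apply [NoZeroDivisors R] {u v : Fin 3 → R} (h : u ⨯₃ v = 0)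
    {i : Fin 3} (hv : v i ≠ 0) (hu : u i = 0) : u = 0 :=
  funext fun j => (mul_eq_zero.1 (by rw [cross_eq_zero_iff.1 h j i, hu, zero_mul])).resolve_right hv

lemma exists_forall_cross_eq_smul [IsDomain R] [IsPrincipalIdealRing R]
    {T : Submodule R (Fin 3 → R)} {x : Fin 3 → R}
    (hT : ∀ y ∈ T, ∀ z ∈ T, x ⬝ᵥ (y ⨯₃ z) = 0) :
    ∃ Y ∈ T, ∀ y ∈ T, ∃ t : R, x ⨯₃ y = t • (x ⨯₃ Y) := by
  by_cases hcol : ∀ y ∈ T, x ⨯₃ y = 0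
  · exact ⟨0, T.zero_mem, fun y hy => ⟨0, by rw [hcol y hy, zero_smul]⟩⟩
  push Not at hcol
  obtain ⟨y₀, hy₀, hne⟩ := hcol
  obtain ⟨i, hi⟩ := Function.ne_iff.1 hne
  have hpar (y : Fin 3 → R) (hy : y ∈ T) (hyi : (x ⨯₃ y) i = 0) : x ⨯₃ y = 0 :=
    eq_zero_of_cross_eq_zero_of_apply
      (by rw [cross_cross_cross, hT y hy y₀ hy₀, zero_smul]) hi hyi
  let s : (Fin 3 → R) →ₗ[R] R := (LinearMap.proj i).comp (crossProduct x)
  obtain ⟨d, hd⟩ := (IsPrincipalIdealRing.principal (T.map s)).principal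
  obtain ⟨Y, hY, rfl⟩ : d ∈ T.map s := hd ▸ Submodule.mem_span_singleton_self d
  refine ⟨Y, hY, fun y hy => ?_⟩
  obtain ⟨t, ht⟩ := Submodule.mem_span_singleton.1 (hd ▸ Submodule.mem_map_of_mem hy)
  refine ⟨t, ?_⟩
  have hsub := hpar (y - t • Y) (T.sub_mem hy (T.smul_mem t hY)) (by
    change s (y - t • Y) = 0
    rw [map_sub, map_smul, ht, sub_self])
  rwa [map_sub, map_smul, sub_eq_zero] at hsub

lemma height_cross_le (x y : Fin 3 → ℤ) : height (x ⨯₃ y) ≤ 2 * height x * height y := by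
  have minor (i j k l : Fin 3) : (x i * y j - x k * y l).natAbs ≤ 2 * height x * height y := by
    calc (x i * y j - x k * y l).natAbs
        ≤ (x i).natAbs * (y j).natAbs + (x k).natAbs * (y l).natAbs :=
          (Int.natAbs_sub_le _ _).trans_eq (by rw [Int.natAbs_mul, Int.natAbs_mul])
      _ ≤ height x * height y + height x * height y := by
          gcongr <;> exact natAbs_le_height _ _
      _ = _ := by ring
  refine height_le_iff.2 fun i => ?_
  fin_cases i <;> exact minor _ _ _ _

lemma abs_triple_product_le {M : ℕ} {x y z : Fin 3 → ℤ} (hx : height x ≤ M) (hy : height y ≤ M)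
    (hz : height z ≤ M) : |x ⬝ᵥ (y ⨯₃ z)| ≤ 6 * (M : ℤ) ^ 3 := by
  have hcross : (height (y ⨯₃ z) : ℤ) ≤ 2 * M * M := by
    exact_mod_cast (height_cross_le y z).trans (by gcongr)
  calc |∑ i, x i * (y ⨯₃ z) i| ≤ ∑ i, |x i| * |(y ⨯₃ z) i| := by
        simpa only [abs_mul] using Finset.abs_sum_le_sum_abs (fun i => x i * (y ⨯₃ z) i) Finset.univ
    _ ≤ ∑ _i : Fin 3, (M * (2 * M * M) : ℤ) := by
        gcongr with i
        · exact (abs_le_height x i).trans (by exact_mod_cast hx)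
        · exact (abs_le_height _ i).trans hcross
    _ = 6 * (M : ℤ) ^ 3 := by
        rw [Finset.sum_const, Finset.card_univ, Fintype.card_fin, nsmul_eq_mul]
        ring

lemma natAbs_mul_height_le {x y g : Fin 3 → ℤ} {t : ℤ} (h : x ⨯₃ y = t • g) :
    t.natAbs * height g ≤ 2 * height x * height y := by
  rw [← height_smul, ← h]
  exact height_cross_le x y

lemma IsPrimVec.eq_or_eq_neg_of_cross_eq_zero {x y : Fin 3 → ℤ} (hx : IsPrimVec x)
    (hy : IsPrimVec y) (hxy : x ⨯₃ y = 0) : y = x ∨ y = -x := by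
  obtain ⟨h, hh⟩ := hx
  obtain ⟨k, hk⟩ := hy
  have hsmul := eq_smul_of_cross_eq_zero hh hxy
  rw [hsmul, dotProduct_smul, smul_eq_mul] at hk
  rcases Int.isUnit_iff.1 (IsUnit.of_mul_eq_one _ hk) with ht | ht <;> rw [ht] at hsmul
  · exact Or.inl (hsmul.trans (one_smul ℤ x))
  · exact Or.inr (hsmul.trans (neg_one_smul ℤ x))

lemma IsPrimVec.eq_of_cross_eq_of_ediv_eq {x y z : Fin 3 → ℤ} (hx : IsPrimVec x) {j : Fin 3}
    (hxj : x j ≠ 0) (hcross : x ⨯₃ y = x ⨯₃ z) (hdiv : y j / x j = z j / x j) : y = z := by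
  obtain ⟨h, hh⟩ := hx
  have hsmul : y - z = (h ⬝ᵥ (y - z)) • x :=
    eq_smul_of_cross_eq_zero hh (by rw [map_sub, hcross, sub_self])
  set c := h ⬝ᵥ (y - z)
  have hyj : y j = z j + c * x j := sub_eq_iff_eq_add'.1 (congrFun hsmul j)
  have hc : c = 0 := by
    rwa [hyj, Int.add_mul_ediv_right _ _ hxj, add_eq_left] at hdiv
  rwa [hc, zero_smul, sub_eq_zero] at hsmul


end CrossProduct

section DiagonalForm

variable {ι R : Type*} [Fintype ι] [CommRing R]

/-- The bilinear form `(x, y) ↦ ∑ i, a i * x i * y i` of the diagonal quadratic form with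
coefficients `a`. -/
def diagBilin (a : ι → R) : LinearMap.BilinForm R (ι → R) :=
  dotProductBilin R R ∘ₗ LinearMap.mulLeft R a

lemma diagBilin_eq_dotProduct (a x y : ι → R) : diagBilin a x y = (a * x) ⬝ᵥ y := rfl

lemma diagBilin_apply (a x y : ι → R) : diagBilin a x y = ∑ i, a i * x i * y i := rfl

lemma diagBilin_smul_self (a : ι → R) (t : R) (x : ι → R) :
    diagBilin a (t • x) (t • x) = t ^ 2 * diagBilin a x x := by
  simp only [map_smul, LinearMap.smul_apply, smul_eq_mul, ← mul_assoc, sq]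

lemma dvd_diagBilin_of_mem_span {a : ι → R} {m : R} {F : Set (ι → R)}
    (h : ∀ x ∈ F, ∀ y ∈ F, m ∣ diagBilin a x y) {x y : ι → R}
    (hx : x ∈ Submodule.span R F) (hy : y ∈ Submodule.span R F) : m ∣ diagBilin a x y := by
  rw [← Ideal.mem_span_singleton]
  exact LinearMap.BilinMap.apply_apply_mem_of_mem_span (Ideal.span {m}) F F (diagBilin a)
    (fun x hx y hy => Ideal.mem_span_singleton.2 (h x hx y hy)) x y hx hy

/-- The coefficients of the adjugate of the ternary diagonal form with coefficients `a`. -/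
def adjCoeff (a : Fin 3 → R) : Fin 3 → R :=
  ![a 1 * a 2, a 0 * a 2, a 0 * a 1]

lemma diagBilin_eq_of_ne {i j k : Fin 3} (hij : i ≠ j) (hjk : j ≠ k) (hik : i ≠ k)
    (a x y : Fin 3 → R) :
    diagBilin a x y = a i * x i * y i + a j * x j * y j + a k * x k * y k := by
  have huniv : (Finset.univ : Finset (Fin 3)) = {i, j, k} := by
    revert i j k; decide
  rw [diagBilin_apply, huniv, Finset.sum_insert (by simp [hij, hik]), Finset.sum_pair hjk,
    add_assoc]

lemma adjCoeff_mul_cross (a x y : Fin 3 → R) :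
    adjCoeff a * (x ⨯₃ y) = (a * x) ⨯₃ (a * y) := by
  ext i
  fin_cases i <;>
  · simp only [adjCoeff, cross_apply, Pi.mul_apply, Fin.zero_eta, Fin.mk_one, Fin.reduceFinMk,
      cons_val]
    ring

lemma diagBilin_adjCoeff_cross (a x y : Fin 3 → R) :
    diagBilin (adjCoeff a) (x ⨯₃ y) (x ⨯₃ y) =
      diagBilin a x x * diagBilin a y y - diagBilin a x y * diagBilin a y x := by
  rw [diagBilin_eq_dotProduct, adjCoeff_mul_cross, cross_dot_cross]
  rfl

lemma diagBilin_comm (a x y : ι → R) : diagBilin a x y = diagBilin a y x := by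
  simp only [diagBilin_apply, mul_right_comm]

lemma gram_det_diagBilin (a x y z : Fin 3 → R) :
    (∏ i, a i) * (x ⬝ᵥ (y ⨯₃ z)) ^ 2 =
      diagBilin a x x * (diagBilin a y y * diagBilin a z z - diagBilin a y z ^ 2)
      - diagBilin a x y * (diagBilin a x y * diagBilin a z z - diagBilin a y z * diagBilin a x z)
      + diagBilin a x z *
        (diagBilin a x y * diagBilin a y z - diagBilin a y y * diagBilin a x z) := by
  simp only [diagBilin_apply, Fin.prod_univ_three, cross_apply, dotProduct, Fin.sum_univ_three,
    cons_val]
  ring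

lemma sq_dvd_diagBilin_of_dvd_cross {P : R} {a x y : ι → R} {i : ι}
    (h2 : IsCoprime (P ^ 2) 2) (hxi : IsCoprime (P ^ 2) (x i)) (hyi : IsCoprime (P ^ 2) (y i))
    (hx : P ^ 2 ∣ diagBilin a x x) (hy : P ^ 2 ∣ diagBilin a y y)
    (hxy : ∀ j, P ∣ x i * y j - x j * y i) : P ^ 2 ∣ diagBilin a x y := by
  choose e he using hxy
  have hsmul : x i • y = y i • x + P • e := funext fun j => by
    simp only [Pi.smul_apply, Pi.add_apply, smul_eq_mul]
    linear_combination he j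
  have hlin : x i * diagBilin a x y = y i * diagBilin a x x + P * diagBilin a x e := by
    simpa only [map_add, map_smul, smul_eq_mul] using congrArg (diagBilin a x) hsmul
  have hquad : 2 * y i * (P * diagBilin a x e) = x i ^ 2 * diagBilin a y y
      - y i ^ 2 * diagBilin a x x - P ^ 2 * diagBilin a e e := by
    rw [← diagBilin_smul_self, hsmul]
    simp only [map_add, map_smul, LinearMap.add_apply, LinearMap.smul_apply, smul_eq_mul,
      diagBilin_comm a e x]
    ring
  have hxe : P ^ 2 ∣ P * diagBilin a x e := (h2.mul_right hyi).dvd_of_dvd_mul_left <| by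
    rw [hquad]
    exact dvd_sub (dvd_sub (hy.mul_left _) (hx.mul_left _)) (dvd_mul_right _ _)
  exact hxi.dvd_of_dvd_mul_left (hlin ▸ dvd_add (hx.mul_left _) hxe)

lemma pow_three_dvd_triple_product {P : ℤ} {a x y z : Fin 3 → ℤ}
    (ha : IsCoprime (P ^ 6) (∏ i, a i))
    (hxx : P ^ 2 ∣ diagBilin a x x) (hyy : P ^ 2 ∣ diagBilin a y y)
    (hzz : P ^ 2 ∣ diagBilin a z z) (hxy : P ^ 2 ∣ diagBilin a x y)
    (hyz : P ^ 2 ∣ diagBilin a y z) (hxz : P ^ 2 ∣ diagBilin a x z) :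
    P ^ 3 ∣ x ⬝ᵥ (y ⨯₃ z) := by
  have hgram : P ^ 6 ∣ (∏ i, a i) * (x ⬝ᵥ (y ⨯₃ z)) ^ 2 := by
    rw [gram_det_diagBilin]
    obtain ⟨bxx, hxx⟩ := hxx
    obtain ⟨byy, hyy⟩ := hyy
    obtain ⟨bzz, hzz⟩ := hzz
    obtain ⟨bxy, hxy⟩ := hxy
    obtain ⟨byz, hyz⟩ := hyz
    obtain ⟨bxz, hxz⟩ := hxz
    rw [hxx, hyy, hzz, hxy, hyz, hxz]
    exact ⟨bxx * (byy * bzz - byz ^ 2) - bxy * (bxy * bzz - byz * bxz)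
      + bxz * (bxy * byz - byy * bxz), by ring⟩
  rw [← Int.pow_dvd_pow_iff two_ne_zero, ← pow_mul]
  exact ha.dvd_of_dvd_mul_left hgram

lemma sq_dvd_diagBilin_adjCoeff [IsDomain R] {P : R} (hP : P ≠ 0) {a x y w : Fin 3 → R}
    (hw : x ⨯₃ y = P • w) (hxx : P ^ 2 ∣ diagBilin a x x) (hyy : P ^ 2 ∣ diagBilin a y y)
    (hxy : P ^ 2 ∣ diagBilin a x y) : P ^ 2 ∣ diagBilin (adjCoeff a) w w := by
  refine (mul_dvd_mul_iff_left (pow_ne_zero 2 hP)).1 ?_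
  rw [← diagBilin_smul_self, ← hw, diagBilin_adjCoeff_cross, diagBilin_comm a y x]
  exact dvd_sub (mul_dvd_mul hxx hyy) (mul_dvd_mul hxy hxy)

end DiagonalForm

section CoplanarCount

variable {M : ℕ} {F : Finset (Fin 3 → ℤ)}

lemma card_le_two_of_cross_eq_zero (hprim : ∀ x ∈ F, IsPrimVec x) {x : Fin 3 → ℤ} (hx : x ∈ F)
    (hcol : ∀ y ∈ F, x ⨯₃ y = 0) : F.card ≤ 2 := by
  classical
  have hsub : F ⊆ {x, -x} := fun y hy => by
    rw [Finset.mem_insert, Finset.mem_singleton]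
    exact (hprim x hx).eq_or_eq_neg_of_cross_eq_zero (hprim y hy) (hcol y hy)
  exact (Finset.card_le_card hsub).trans Finset.card_le_two

lemma natAbs_ediv_mul_le (a : ℤ) {b : ℤ} (hb : b ≠ 0) :
    (a / b).natAbs * b.natAbs ≤ a.natAbs + b.natAbs := by
  have hdiv := Int.mul_ediv_add_emod a b
  have hnonneg := Int.emod_nonneg a hb
  have hlt := Int.emod_lt_abs a hb
  rw [Int.abs_eq_natAbs] at hlt
  rw [← Int.natAbs_mul, mul_comm]
  omega

lemma card_le_of_cross_eq_smul {x g : Fin 3 → ℤ} (hprim : IsPrimVec x) {j : Fin 3} (hxj : x j ≠ 0)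
    {t : (Fin 3 → ℤ) → ℤ} (ht : ∀ y ∈ F, x ⨯₃ y = t y • g) {A U : ℕ}
    (hA : ∀ y ∈ F, (t y).natAbs ≤ A) (hU : ∀ y ∈ F, (y j / x j).natAbs ≤ U) :
    F.card ≤ (2 * A + 1) * (2 * U + 1) := by
  have hinj : Set.InjOn (fun y => (t y, y j / x j)) (F : Set (Fin 3 → ℤ)) := by
    intro y hy z hz hyz
    rw [Prod.mk.injEq] at hyz
    exact hprim.eq_of_cross_eq_of_ediv_eq hxj (by rw [ht y hy, ht z hz, hyz.1]) hyz.2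
  have hmaps : Set.MapsTo (fun y => (t y, y j / x j)) (F : Set (Fin 3 → ℤ))
      (Finset.Icc (-(A : ℤ)) A ×ˢ Finset.Icc (-(U : ℤ)) U : Finset (ℤ × ℤ)) := by
    intro y hy
    have hyA := hA y hy
    have hyU := hU y hy
    simp only [Finset.coe_product, Finset.coe_Icc, Set.mem_prod, Set.mem_Icc]
    omega
  refine (Finset.card_le_card_of_injOn _ hmaps hinj).trans ?_
  rw [Finset.card_product, Int.card_Icc, Int.card_Icc]
  gcongr <;> omega

lemma card_mul_height_le {x g : Fin 3 → ℤ} (hprim : IsPrimVec x) (hx : height x ≤ M)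
    (hM : ∀ y ∈ F, height y ≤ M) (hg : g ≠ 0) (hpar : ∀ y ∈ F, ∃ t : ℤ, x ⨯₃ y = t • g)
    (hne : ∃ y ∈ F, x ⨯₃ y ≠ 0) : F.card * height g ≤ 30 * M ^ 2 := by
  obtain ⟨j, hj⟩ := exists_natAbs_eq_height x
  have hX : 0 < height x := height_pos.2 hprim.ne_zero
  have hxj : x j ≠ 0 := by rw [← Int.natAbs_ne_zero, hj]; exact hX.ne'
  have hG : 0 < height g := height_pos.2 hg
  choose! t ht using hpar
  have htg (y) (hy : y ∈ F) : (t y).natAbs * height g ≤ 2 * M * height x :=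
    calc (t y).natAbs * height g ≤ 2 * height x * height y := natAbs_mul_height_le (ht y hy)
      _ ≤ 2 * height x * M := Nat.mul_le_mul_left _ (hM y hy)
      _ = 2 * M * height x := by ring
  set A : ℕ := 2 * M * height x / height g
  set U : ℕ := (M + height x) / height x
  have htA (y) (hy : y ∈ F) : (t y).natAbs ≤ A := (Nat.le_div_iff_mul_le hG).2 (htg y hy)
  have hqU (y) (hy : y ∈ F) : (y j / x j).natAbs ≤ U := by
    rw [Nat.le_div_iff_mul_le hX]
    have := natAbs_ediv_mul_le (y j) hxj
    rw [hj] at this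
    exact this.trans (Nat.add_le_add_right ((natAbs_le_height y j).trans (hM y hy)) _)
  have hA : 1 ≤ A := by
    obtain ⟨y, hy, hxy⟩ := hne
    refine le_trans (Int.natAbs_pos.2 fun h0 => hxy ?_) (htA y hy)
    rw [ht y hy, h0, zero_smul]
  have hcard : F.card ≤ 3 * A * (2 * U + 1) :=
    (card_le_of_cross_eq_smul hprim hxj ht htA hqU).trans (Nat.mul_le_mul_right _ (by omega))
  have hAg : A * height g ≤ 2 * M * height x := Nat.div_mul_le_self _ _
  have hUx : U * height x ≤ M + height x := Nat.div_mul_le_self _ _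
  calc F.card * height g ≤ 3 * A * (2 * U + 1) * height g := Nat.mul_le_mul_right _ hcard
    _ = 3 * (2 * U + 1) * (A * height g) := by ring
    _ ≤ 3 * (2 * U + 1) * (2 * M * height x) := Nat.mul_le_mul_left _ hAg
    _ = 6 * M * (2 * (U * height x) + height x) := by ring
    _ ≤ 6 * M * (5 * M) := Nat.mul_le_mul_left _ (by omega)
    _ = 30 * M ^ 2 := by ring

lemma exists_mem_span_cross_eq_smul {P : ℤ} {x : Fin 3 → ℤ}
    (hcross : ∀ y ∈ F, ∀ i, P ∣ (x ⨯₃ y) i)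
    (hcop : ∀ y ∈ F, ∀ z ∈ F, x ⬝ᵥ (y ⨯₃ z) = 0) :
    ∃ Y ∈ Submodule.span ℤ (F : Set (Fin 3 → ℤ)), (∃ w, x ⨯₃ Y = P • w) ∧
      ∀ y ∈ F, ∃ t : ℤ, x ⨯₃ y = t • (x ⨯₃ Y) := by
  set T := Submodule.span ℤ (F : Set (Fin 3 → ℤ))
  obtain ⟨Y, hYT, hY⟩ : ∃ Y ∈ T, ∀ y ∈ T, ∃ t : ℤ, x ⨯₃ y = t • (x ⨯₃ Y) := by
    refine exists_forall_cross_eq_smul fun y hy z hz => ?_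
    exact LinearMap.BilinMap.apply_apply_mem_of_mem_span (⊥ : Submodule ℤ ℤ) F F
      (crossProduct.compr₂ (dotProductBilin ℤ ℤ x)) hcop y z hy hz
  have hPY (j : Fin 3) : P ∣ (x ⨯₃ Y) j := by
    have hle : T ≤ Submodule.comap (LinearMap.proj j ∘ₗ crossProduct x) (Ideal.span {P}) :=
      Submodule.span_le.2 fun y hy => Ideal.mem_span_singleton.2 (hcross y hy j)
    exact Ideal.mem_span_singleton.1 (hle hYT)
  choose w hw using hPY
  exact ⟨Y, hYT, ⟨w, funext hw⟩, fun y hy => hY y (Submodule.subset_span hy)⟩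

/-- The plane spanned by `F` has the normal vector `w`, and the points of `F` are counted by their
positions along the direction of one of them and across it. -/
lemma card_le_two_or_exists_normal {P : ℤ} (hP : P ≠ 0) {a : Fin 3 → ℤ}
    (hprim : ∀ x ∈ F, IsPrimVec x) (hM : ∀ x ∈ F, height x ≤ M)
    (hcross : ∀ x ∈ F, ∀ y ∈ F, ∀ i, P ∣ (x ⨯₃ y) i)
    (horth : ∀ x ∈ F, ∀ y ∈ F, P ^ 2 ∣ diagBilin a x y)
    (hcop : ∀ x ∈ F, ∀ y ∈ F, ∀ z ∈ F, x ⬝ᵥ (y ⨯₃ z) = 0) :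
    F.card ≤ 2 ∨ ∃ w : Fin 3 → ℤ, w ≠ 0 ∧ P ^ 2 ∣ diagBilin (adjCoeff a) w w ∧
      P.natAbs * height w ≤ 2 * M ^ 2 ∧ F.card * (P.natAbs * height w) ≤ 30 * M ^ 2 ∧
      ∃ x ∈ F, x ⬝ᵥ w = 0 := by
  rcases F.eq_empty_or_nonempty with rfl | ⟨x, hx⟩
  · exact Or.inl zero_le_two
  by_cases hcol : ∀ y ∈ F, x ⨯₃ y = 0
  · exact Or.inl (card_le_two_of_cross_eq_zero hprim hx hcol)
  push Not at hcol
  obtain ⟨Y, hYT, ⟨w, hxY⟩, hY⟩ := exists_mem_span_cross_eq_smul (hcross x hx) (hcop x hx)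
  have hheight : height (x ⨯₃ Y) = P.natAbs * height w := by rw [hxY, height_smul]
  obtain ⟨y₀, hy₀, hne⟩ := hcol
  obtain ⟨t₀, ht₀⟩ := hY y₀ hy₀
  have hxY0 : x ⨯₃ Y ≠ 0 := fun h => hne (by rw [ht₀, h, smul_zero])
  have ht₀0 : t₀ ≠ 0 := fun h => hne (by rw [ht₀, h, zero_smul])
  refine Or.inr ⟨w, ?_, ?_, ?_, ?_, x, hx, ?_⟩
  · rintro rfl
    exact hxY0 (by rw [hxY, smul_zero])
  · exact sq_dvd_diagBilin_adjCoeff hP hxY (horth x hx x hx)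
      (dvd_diagBilin_of_mem_span horth hYT hYT)
      (dvd_diagBilin_of_mem_span horth (Submodule.subset_span hx) hYT)
  · calc P.natAbs * height w ≤ t₀.natAbs * height (x ⨯₃ Y) :=
          hheight ▸ Nat.le_mul_of_pos_left _ (Int.natAbs_pos.2 ht₀0)
      _ ≤ 2 * height x * height y₀ := natAbs_mul_height_le ht₀
      _ ≤ 2 * M * M := by gcongr; exacts [hM x hx, hM y₀ hy₀]
      _ = 2 * M ^ 2 := by ring
  · rw [← hheight]
    exact card_mul_height_le (hprim x hx) (hM x hx) hM hxY0 hY ⟨y₀, hy₀, hne⟩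
  · have hdot := dot_self_cross x Y
    rw [hxY, dotProduct_smul, smul_eq_mul] at hdot
    exact (mul_eq_zero.1 hdot).resolve_left hP

end CoplanarCount

section CoplanarSolutions

variable {R : Type*} [CommRing R]

lemma map_diagBilin {ι S : Type*} [Fintype ι] [CommRing S] (f : R →+* S) (a x y : ι → R) :
    f (diagBilin a x y) = diagBilin (f ∘ a) (f ∘ x) (f ∘ y) := by
  simp only [diagBilin_apply, map_sum, map_mul, Function.comp_apply]

lemma map_cross {S : Type*} [CommRing S] (f : R →+* S) (x y : Fin 3 → R) (i : Fin 3) :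
    f ((x ⨯₃ y) i) = ((f ∘ x) ⨯₃ (f ∘ y)) i := by
  have minor (u v : Fin 3) : f (x u * y v - x v * y u) = f (x u) * f (y v) - f (x v) * f (y u) := by
    rw [map_sub, map_mul, map_mul]
  fin_cases i <;> exact minor _ _

lemma cross_eq_zero_of_isotropic [IsDomain R] {a x e : Fin 3 → R} (ha : ∀ i, a i ≠ 0)
    (hxx : diagBilin a x x = 0) (hxe : diagBilin a x e = 0) (hee : diagBilin a e e = 0) :
    x ⨯₃ e = 0 := by
  set c := x ⨯₃ e with hc
  have hxc : (a * x) ⨯₃ c = 0 := by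
    rw [hc, cross_cross_eq_smul_sub_smul', dotProduct_comm x, ← diagBilin_eq_dotProduct,
      ← diagBilin_eq_dotProduct, hxx, hxe, zero_smul, zero_smul, sub_zero]
  have hec : (a * e) ⨯₃ c = 0 := by
    rw [hc, cross_cross_eq_smul_sub_smul', dotProduct_comm x, ← diagBilin_eq_dotProduct,
      ← diagBilin_eq_dotProduct, hee, diagBilin_comm, hxe, zero_smul, zero_smul, sub_zero]
  by_contra hne
  obtain ⟨i, hi⟩ := Function.ne_iff.1 hne
  have hadj : adjCoeff a * c = 0 := by
    rw [adjCoeff_mul_cross, cross_eq_zero_iff]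
    intro u v
    apply mul_right_cancel₀ (mul_ne_zero hi hi)
    have hxu := cross_eq_zero_iff.1 hxc u i
    have hxv := cross_eq_zero_iff.1 hxc v i
    have heu := cross_eq_zero_iff.1 hec u i
    have hev := cross_eq_zero_iff.1 hec v i
    linear_combination (a * e) v * c i * hxu + (a * x) i * c u * hev
      - (a * e) u * c i * hxv - (a * x) i * c v * heu
  have hadji : adjCoeff a i ≠ 0 := by
    fin_cases i <;> exact mul_ne_zero (ha _) (ha _)
  exact mul_ne_zero hadji hi (congrFun hadj i)

lemma dvd_cross_of_dvd_diagBilin {p : R} (hp : Prime p) {a x e : Fin 3 → R} (ha : ∀ i, ¬ p ∣ a i)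
    (hxx : p ∣ diagBilin a x x) (hxe : p ∣ diagBilin a x e) (hee : p ∣ diagBilin a e e)
    (i : Fin 3) : p ∣ (x ⨯₃ e) i := by
  have : (Ideal.span {p}).IsPrime := (Ideal.span_singleton_prime hp.ne_zero).2 hp
  have hmk (u : R) : Ideal.Quotient.mk (Ideal.span {p}) u = 0 ↔ p ∣ u :=
    Ideal.Quotient.eq_zero_iff_dvd p u
  rw [← hmk] at hxx hxe hee ⊢
  rw [map_diagBilin] at hxx hxe hee
  rw [map_cross, cross_eq_zero_of_isotropic (fun i h => ha i ((hmk _).1 h)) hxx hxe hee,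
    Pi.zero_apply]

lemma exists_cross_eq_and_forall_eq_smul_add_smul {x v : Fin 3 → R} (hx : IsPrimVec x)
    (hv : IsPrimVec v) (hxv : x ⬝ᵥ v = 0) :
    ∃ e, x ⨯₃ e = v ∧ ∀ u, u ⬝ᵥ v = 0 → ∃ l s : R, u = l • x + s • e := by
  obtain ⟨h, hh⟩ := hx
  obtain ⟨g, hg⟩ := hv
  refine ⟨v ⨯₃ h, ?_, fun u hu => ⟨h ⬝ᵥ u, g ⬝ᵥ (x ⨯₃ u), ?_⟩⟩
  · rw [cross_cross_eq_smul_sub_smul', dotProduct_comm x h, hh, one_smul, dotProduct_comm v x, hxv,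
      zero_smul, sub_zero]
  · have hxu : x ⨯₃ u = (g ⬝ᵥ (x ⨯₃ u)) • v := eq_smul_of_cross_eq_zero hg <| by
      rw [cross_cross_eq_smul_sub_smul', dotProduct_comm v u, hu, hxv, zero_smul, zero_smul,
        sub_zero]
    have hhxu := cross_cross_eq_smul_sub_smul' h x u
    rw [dotProduct_comm x h, hh, one_smul, hxu, map_smul, ← cross_anticomm v h, smul_neg] at hhxu
    rw [← neg_sub, neg_inj] at hhxu
    exact sub_eq_iff_eq_add'.1 hhxu.symm

lemma pow_dvd_or_pow_dvd_of_pow_mul_pow_dvd_mul [IsDomain R] {p : R} (hp : Prime p) {r : ℕ}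
    {s t : R} (h : p ^ r * p ^ r ∣ s * t) : p ^ r ∣ s ∨ p ^ r ∣ t := by
  rw [← pow_add, pow_dvd_iff_le_emultiplicity, emultiplicity_mul hp] at h
  rw [pow_dvd_iff_le_emultiplicity, pow_dvd_iff_le_emultiplicity]
  by_contra! hlt
  refine (WithTop.add_lt_add hlt.1 hlt.2).not_ge ?_
  exact_mod_cast h

lemma dvd_and_dvd_of_dvd_linear [IsDomain R] {p : R} (hp : Prime p) {r : ℕ} {l s l' s' b c : R}
    (h : p ^ r ∣ l * b + s * c) (h' : p ^ r ∣ l' * b + s' * c)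
    (hdet : ¬ p ^ r ∣ l * s' - l' * s) : p ∣ b ∧ p ∣ c := by
  have cancel (u : R) (hu : p ^ r ∣ (l * s' - l' * s) * u) : p ∣ u := by
    by_contra hpu
    exact hdet (hp.pow_dvd_of_dvd_mul_right r hpu hu)
  constructor
  · refine cancel b ?_
    convert dvd_sub (h.mul_left s') (h'.mul_left s) using 1
    ring
  · refine cancel c ?_
    convert dvd_sub (h'.mul_left l) (h.mul_left l') using 1
    ring

lemma pow_dvd_or_pow_dvd_of_diagBilin_eq [IsDomain R] {ι : Type*} [Fintype ι] {p : R}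
    (hp : Prime p) {r : ℕ} {a x e : ι → R} {l s : R} (hxx : (p ^ r) ^ 2 ∣ diagBilin a x x)
    (hu : (p ^ r) ^ 2 ∣ diagBilin a (l • x + s • e) (l • x + s • e)) :
    p ^ r ∣ s ∨ p ^ r ∣ l * (2 * diagBilin a x e) + s * diagBilin a e e := by
  refine pow_dvd_or_pow_dvd_of_pow_mul_pow_dvd_mul hp ?_
  rw [← sq]
  convert dvd_sub hu (hxx.mul_left (l ^ 2)) using 1
  simp only [map_add, map_smul, LinearMap.add_apply, LinearMap.smul_apply, smul_eq_mul,
    diagBilin_comm a e x]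
  ring

/-- If the three points are pairwise incongruent, the form vanishes modulo `p` on the whole plane,
which is impossible for a nondegenerate ternary form. -/
lemma exists_dvd_cross_of_coplanar [IsDomain R] [IsPrincipalIdealRing R] {p : R} (hp : Prime p)
    (h2 : ¬ p ∣ 2) {r : ℕ} {a w x y z : Fin 3 → R} (ha : ∀ i, ¬ p ∣ a i) (hw : w ≠ 0)
    (hx : IsPrimVec x) (hxw : x ⬝ᵥ w = 0) (hyw : y ⬝ᵥ w = 0) (hzw : z ⬝ᵥ w = 0)
    (hQx : (p ^ r) ^ 2 ∣ diagBilin a x x) (hQy : (p ^ r) ^ 2 ∣ diagBilin a y y)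
    (hQz : (p ^ r) ^ 2 ∣ diagBilin a z z) :
    (∀ i, p ^ r ∣ (x ⨯₃ y) i) ∨ (∀ i, p ^ r ∣ (x ⨯₃ z) i) ∨ (∀ i, p ^ r ∣ (y ⨯₃ z) i) := by
  obtain ⟨d, v, hv, rfl⟩ := exists_eq_smul_isPrimVec hw
  have hd : d ≠ 0 := fun h => hw (by rw [h, zero_smul])
  simp only [dotProduct_smul, smul_eq_mul, mul_eq_zero, hd, false_or] at hxw hyw hzw
  obtain ⟨e, hxe, hspan⟩ := exists_cross_eq_and_forall_eq_smul_add_smul hx hv hxw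
  obtain ⟨l, s, rfl⟩ := hspan y hyw
  obtain ⟨l', s', rfl⟩ := hspan z hzw
  have hxcross (l s : R) : x ⨯₃ (l • x + s • e) = s • v := by
    rw [map_add, map_smul, map_smul, cross_self, smul_zero, zero_add, hxe]
  have hyz : (l • x + s • e) ⨯₃ (l' • x + s' • e) = (l * s' - l' * s) • v := by
    simp only [map_add, map_smul, LinearMap.add_apply, LinearMap.smul_apply, cross_self, hxe,
      ← cross_anticomm x e]
    module
  have dvd_smul {t : R} (ht : p ^ r ∣ t) (i : Fin 3) : p ^ r ∣ (t • v) i := ht.mul_right _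
  rcases pow_dvd_or_pow_dvd_of_diagBilin_eq hp hQx hQy with hs | hy
  · exact Or.inl (hxcross l s ▸ dvd_smul hs)
  rcases pow_dvd_or_pow_dvd_of_diagBilin_eq hp hQx hQz with hs' | hz
  · exact Or.inr (Or.inl (hxcross l' s' ▸ dvd_smul hs'))
  by_cases hdet : p ^ r ∣ l * s' - l' * s
  · exact Or.inr (Or.inr (hyz ▸ dvd_smul hdet))
  obtain ⟨h2xe, hee⟩ := dvd_and_dvd_of_dvd_linear hp hy hz hdet
  have hpr : p ∣ (p ^ r) ^ 2 := by
    have hr : r ≠ 0 := by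
      rintro rfl
      exact hdet (pow_zero p ▸ one_dvd _)
    exact dvd_pow (dvd_pow_self p hr) two_ne_zero
  obtain ⟨k, hk⟩ := hv.exists_not_dvd hp.not_isUnit
  exact absurd (hxe ▸ dvd_cross_of_dvd_diagBilin hp ha (hpr.trans hQx)
    ((hp.dvd_or_dvd h2xe).resolve_left h2) hee k) hk

end CoplanarSolutions

section ProjectiveClass

variable {ι R : Type*} [CommRing R]

lemma exists_ne_not_dvd_of_dvd_diagBilin [Fintype ι] {p : R} (hp : Prime p) {a τ : ι → R} {i : ι}
    (ha : ¬ p ∣ a i) (hi : ¬ p ∣ τ i) (hQ : p ∣ diagBilin a τ τ) : ∃ j ≠ i, ¬ p ∣ τ j := by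
  classical
  by_contra! hcon
  rw [diagBilin_apply, ← Finset.add_sum_erase _ _ (Finset.mem_univ i)] at hQ
  have hrest : p ∣ ∑ j ∈ Finset.univ.erase i, a j * τ j * τ j :=
    Finset.dvd_sum fun j hj => (hcon j (Finset.ne_of_mem_erase hj)).mul_left _
  have hpi := (dvd_add_left hrest).1 hQ
  simp only [hp.dvd_mul, ha, hi, or_self] at hpi

lemma forall_dvd_cross_of_isCoprime {P : R} {x y : Fin 3 → R} {i : Fin 3}
    (hxi : IsCoprime P (x i)) (h : ∀ u, P ∣ x u * y i - x i * y u) : ∀ l, P ∣ (x ⨯₃ y) l := by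
  refine forall_dvd_cross_iff.2 fun u v => hxi.dvd_of_dvd_mul_left ?_
  convert dvd_sub ((h u).mul_left (x v)) ((h v).mul_left (x u)) using 1
  ring

lemma forall_dvd_cross_of_dvd {P : R} {a x y : Fin 3 → R} {i j k : Fin 3} (hij : i ≠ j)
    (hjk : j ≠ k) (hik : i ≠ k) (hxi : IsCoprime P (x i))
    (hj : IsCoprime P (a j * (x j * y i + x i * y j)))
    (hx : P ∣ diagBilin a x x) (hy : P ∣ diagBilin a y y) (h : P ∣ x k * y i - x i * y k) :
    ∀ l, P ∣ (x ⨯₃ y) l := by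
  refine forall_dvd_cross_of_isCoprime hxi fun u => ?_
  obtain rfl | rfl | rfl : u = i ∨ u = j ∨ u = k := by lia
  · rw [sub_self]
    exact dvd_zero P
  · refine hj.dvd_of_dvd_mul_left ?_
    convert dvd_sub (dvd_sub (hx.mul_left (y i ^ 2)) (hy.mul_left (x i ^ 2)))
      (h.mul_left (a k * (x k * y i + x i * y k))) using 1
    rw [diagBilin_eq_of_ne hij hjk hik, diagBilin_eq_of_ne hij hjk hik]
    ring
  · exact h

lemma mul_inv_eq_mul_inv_iff_dvd {n : ℕ} {a b c d : ℤ} (hb : IsCoprime (n : ℤ) b)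
    (hd : IsCoprime (n : ℤ) d) :
    (a : ZMod n) * (b : ZMod n)⁻¹ = c * (d : ZMod n)⁻¹ ↔ (n : ℤ) ∣ a * d - b * c := by
  have hb' := ZMod.mul_inv_of_unit _ ((ZMod.coe_int_isUnit_iff_isCoprime b n).2 hb)
  have hd' := ZMod.mul_inv_of_unit _ ((ZMod.coe_int_isUnit_iff_isCoprime d n).2 hd)
  rw [← ZMod.intCast_zmod_eq_zero_iff_dvd]
  push_cast
  constructor <;> intro h
  · linear_combination (b : ZMod n) * d * h - (a : ZMod n) * d * hb' + (c : ZMod n) * b * hd'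
  · linear_combination (b : ZMod n)⁻¹ * (d : ZMod n)⁻¹ * h
      - (a : ZMod n) * (b : ZMod n)⁻¹ * hd' + (c : ZMod n) * (d : ZMod n)⁻¹ * hb'

variable {p : ℕ} [Fact p.Prime]

lemma prime_intCast : Prime (p : ℤ) := Nat.prime_iff_prime_int.1 Fact.out

lemma not_dvd_two (hp2 : p ≠ 2) : ¬ (p : ℤ) ∣ 2 := fun h =>
  hp2 ((Nat.prime_dvd_prime_iff_eq Fact.out Nat.prime_two).1 (by exact_mod_cast h))

lemma isCoprime_pow_of_not_dvd (r : ℕ) {u : ℤ} (hu : ¬ (p : ℤ) ∣ u) : IsCoprime ((p : ℤ) ^ r) u :=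
  ((Prime.coprime_iff_not_dvd prime_intCast).2 hu).pow_left

lemma exists_projective_class_map (hp2 : p ≠ 2) {r : ℕ} {a τ : Fin 3 → ℤ}
    (ha : ∀ i, ¬ (p : ℤ) ∣ a i) {i : Fin 3} (hi : ¬ (p : ℤ) ∣ τ i)
    (hQ : (p : ℤ) ∣ diagBilin a τ τ) :
    ∃ κ : (Fin 3 → ℤ) → ZMod (p ^ r),
      ∀ x y : Fin 3 → ℤ, (∀ j, x j ≡ τ j [ZMOD p]) → (∀ j, y j ≡ τ j [ZMOD p]) →
        (p : ℤ) ^ r ∣ diagBilin a x x → (p : ℤ) ^ r ∣ diagBilin a y y →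
        (κ x = κ y ↔ ∀ j, (p : ℤ) ^ r ∣ (x ⨯₃ y) j) := by
  have hp : Prime (p : ℤ) := prime_intCast
  obtain ⟨j, hji, hj⟩ := exists_ne_not_dvd_of_dvd_diagBilin hp (ha i) hi hQ
  have exists_third (u v : Fin 3) : ∃ k, u ≠ k ∧ v ≠ k := by decide +revert
  obtain ⟨k, hjk, hik⟩ := exists_third j i
  refine ⟨fun x => x k * (x i : ZMod (p ^ r))⁻¹, fun x y hx hy hQx hQy => ?_⟩
  have hcop (z : Fin 3 → ℤ) (hz : ∀ j, z j ≡ τ j [ZMOD p]) : IsCoprime ((p : ℤ) ^ r) (z i) :=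
    isCoprime_pow_of_not_dvd r fun h => hi ((Int.ModEq.dvd_iff (hz i)).1 h)
  rw [mul_inv_eq_mul_inv_iff_dvd (by exact_mod_cast hcop x hx) (by exact_mod_cast hcop y hy),
    Nat.cast_pow]
  refine ⟨fun h => ?_, fun h => forall_dvd_cross_iff.1 h k i⟩
  refine forall_dvd_cross_of_dvd hji.symm hjk hik (hcop x hx)
    (isCoprime_pow_of_not_dvd r ?_) hQx hQy h
  have hsum : x j * y i + x i * y j ≡ 2 * (τ j * τ i) [ZMOD p] := by
    convert ((hx j).mul (hy i)).add ((hx i).mul (hy j)) using 1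
    ring
  simp only [hp.dvd_mul, Int.ModEq.dvd_iff hsum, ha, hi, hj, not_dvd_two hp2, or_self,
    not_false_eq_true]

end ProjectiveClass

section SmallZeros

/-- The box of integer vectors of height at most `M`. -/
noncomputable def box {ι : Type*} [Fintype ι] [DecidableEq ι] (M : ℕ) : Finset (ι → ℤ) :=
  Finset.Icc (fun _ => -(M : ℤ)) (fun _ => (M : ℤ))

lemma mem_box {ι : Type*} [Fintype ι] [DecidableEq ι] {M : ℕ} {x : ι → ℤ} :
    x ∈ box M ↔ height x ≤ M := by
  rw [box, Finset.mem_Icc, Pi.le_def, Pi.le_def, height_le_iff, ← forall_and]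
  exact forall_congr' fun i => by lia

/-- The nonzero integer vectors of height at most `A` at which the diagonal quadratic form with
coefficients `a` vanishes modulo `q`. -/
noncomputable def smallZeros (q : ℤ) (a : Fin 3 → ℤ) (A : ℕ) : Finset (Fin 3 → ℤ) :=
  {x ∈ box A | x ≠ 0 ∧ q ∣ diagBilin a x x}

open Classical in
/-- The primitive vectors among `smallZeros q a A`. -/
noncomputable def primZeros (q : ℤ) (a : Fin 3 → ℤ) (A : ℕ) : Finset (Fin 3 → ℤ) :=
  {x ∈ smallZeros q a A | IsPrimVec x}

lemma mem_smallZeros {q : ℤ} {a x : Fin 3 → ℤ} {A : ℕ} :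
    x ∈ smallZeros q a A ↔ height x ≤ A ∧ x ≠ 0 ∧ q ∣ diagBilin a x x := by
  rw [smallZeros, Finset.mem_filter, mem_box]

lemma mem_primZeros {q : ℤ} {a x : Fin 3 → ℤ} {A : ℕ} :
    x ∈ primZeros q a A ↔ height x ≤ A ∧ IsPrimVec x ∧ q ∣ diagBilin a x x := by
  classical
  rw [primZeros, Finset.mem_filter, mem_smallZeros]
  exact ⟨fun h => ⟨h.1.1, h.2, h.1.2.2⟩, fun h => ⟨⟨h.1, h.2.1.ne_zero, h.2.2⟩, h.2.1⟩⟩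

lemma primZeros_subset_of_dvd {q q' : ℤ} (h : q' ∣ q) (a : Fin 3 → ℤ) (A : ℕ) :
    primZeros q a A ⊆ primZeros q' a A := fun x hx => by
  rw [mem_primZeros] at hx ⊢
  exact ⟨hx.1, hx.2.1, h.trans hx.2.2⟩

lemma filter_height_le_smallZeros {q : ℤ} {a : Fin 3 → ℤ} {A B : ℕ} (hBA : B ≤ A) :
    {w ∈ smallZeros q a A | height w ≤ B} = smallZeros q a B := by
  ext w
  simp only [Finset.mem_filter, mem_smallZeros]
  exact ⟨fun h => ⟨h.2, h.1.2⟩, fun h => ⟨⟨h.1.trans hBA, h.2⟩, h.1⟩⟩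

end SmallZeros

section ResidueClass

lemma card_le_of_forall_fiber_le_or {α κ β : Type*} [Fintype κ] [DecidableEq κ] {S : Finset α}
    {W : Finset β} (key : α → κ) (R : κ → β → Prop) {f : β → ℝ} {c d : ℕ}
    (hf : ∀ w ∈ W, 0 ≤ f w)
    (hfib : ∀ k, Finset.card {x ∈ S | key x = k} ≤ c ∨
      ∃ w ∈ W, R k w ∧ (Finset.card {x ∈ S | key x = k} : ℝ) ≤ f w)
    (hR : ∀ w ∈ W, ∀ B : Finset κ, (∀ k ∈ B, R k w) → B.card ≤ d) :
    (S.card : ℝ) ≤ c * Fintype.card κ + d * ∑ w ∈ W, f w := by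
  classical
  have hfiber (k : κ) :
      (Finset.card {x ∈ S | key x = k} : ℝ) ≤ c + ∑ w ∈ W, if R k w then f w else 0 := by
    have hnonneg (w : β) (hw : w ∈ W) : 0 ≤ if R k w then f w else 0 := by
      split_ifs
      exacts [hf w hw, le_rfl]
    rcases hfib k with h | ⟨w, hw, hRw, h⟩
    · exact le_add_of_le_of_nonneg (by exact_mod_cast h) (Finset.sum_nonneg hnonneg)
    · have hle := Finset.single_le_sum hnonneg hw
      rw [if_pos hRw] at hle
      linarith [Nat.cast_nonneg (α := ℝ) c]
  have hserved (w : β) (hw : w ∈ W) : ∑ k : κ, (if R k w then f w else 0) ≤ d * f w := by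
    rw [← Finset.sum_filter, Finset.sum_const, nsmul_eq_mul]
    gcongr
    · exact hf w hw
    · exact hR w hw _ fun k hk => (Finset.mem_filter.1 hk).2
  calc (S.card : ℝ) = ∑ k : κ, (Finset.card {x ∈ S | key x = k} : ℝ) := by
        exact_mod_cast Finset.card_eq_sum_card_fiberwise fun x _ => Finset.mem_univ (key x)
    _ ≤ ∑ k : κ, (c + ∑ w ∈ W, if R k w then f w else 0) := Finset.sum_le_sum fun k _ => hfiber k
    _ = c * Fintype.card κ + ∑ w ∈ W, ∑ k : κ, if R k w then f w else 0 := by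
        rw [Finset.sum_add_distrib, Finset.sum_comm, Finset.sum_const, nsmul_eq_mul, mul_comm,
          Finset.card_univ]
    _ ≤ c * Fintype.card κ + d * ∑ w ∈ W, f w := by
        rw [Finset.mul_sum]
        gcongr with w hw
        exact hserved w hw

variable {p : ℕ} [Fact p.Prime] {r M : ℕ} {a : Fin 3 → ℤ}

lemma sq_dvd_diagBilin_of_projectively_congruent (hp2 : p ≠ 2) {x y : Fin 3 → ℤ} {i : Fin 3}
    (hxi : ¬ (p : ℤ) ∣ x i) (hyi : ¬ (p : ℤ) ∣ y i) (hx : ((p : ℤ) ^ r) ^ 2 ∣ diagBilin a x x)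
    (hy : ((p : ℤ) ^ r) ^ 2 ∣ diagBilin a y y) (hxy : ∀ j, (p : ℤ) ^ r ∣ (x ⨯₃ y) j) :
    ((p : ℤ) ^ r) ^ 2 ∣ diagBilin a x y :=
  sq_dvd_diagBilin_of_dvd_cross (isCoprime_pow_of_not_dvd r (not_dvd_two hp2)).pow_left
    (isCoprime_pow_of_not_dvd r hxi).pow_left (isCoprime_pow_of_not_dvd r hyi).pow_left hx hy
    (forall_dvd_cross_iff.1 hxy i)

lemma card_le_two_or_exists_adjCoeff_zero (hp2 : p ≠ 2) (ha : ∀ i, ¬ (p : ℤ) ∣ a i)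
    (hM3 : 6 * M ^ 3 < (p ^ r) ^ 3) {F : Finset (Fin 3 → ℤ)}
    (hF : F ⊆ primZeros (((p : ℤ) ^ r) ^ 2) a M) {i : Fin 3} (hi : ∀ x ∈ F, ¬ (p : ℤ) ∣ x i)
    (hcross : ∀ x ∈ F, ∀ y ∈ F, ∀ j, (p : ℤ) ^ r ∣ (x ⨯₃ y) j) :
    F.card ≤ 2 ∨ ∃ w ∈ smallZeros (((p : ℤ) ^ r) ^ 2) (adjCoeff a) (2 * M ^ 2 / p ^ r),
      (∃ x ∈ F, x ⬝ᵥ w = 0) ∧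
        (F.card : ℝ) ≤ 30 * (M : ℝ) ^ 2 / (p : ℝ) ^ r * (1 / (height w : ℝ)) := by
  have hp : 0 < p := (Fact.out : p.Prime).pos
  have hmem (x) (hx : x ∈ F) := mem_primZeros.1 (hF hx)
  have horth : ∀ x ∈ F, ∀ y ∈ F, ((p : ℤ) ^ r) ^ 2 ∣ diagBilin a x y := fun x hx y hy =>
    sq_dvd_diagBilin_of_projectively_congruent hp2 (hi x hx) (hi y hy) (hmem x hx).2.2
      (hmem y hy).2.2 (hcross x hx y hy)
  have hdet : ∀ x ∈ F, ∀ y ∈ F, ∀ z ∈ F, x ⬝ᵥ (y ⨯₃ z) = 0 := by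
    intro x hx y hy z hz
    have hprod : ¬ (p : ℤ) ∣ ∏ i, a i := by
      simpa only [prime_intCast.dvd_finsetProd_iff, Finset.mem_univ, true_and, not_exists] using ha
    refine Int.eq_zero_of_abs_lt_dvd
      (pow_three_dvd_triple_product (isCoprime_pow_of_not_dvd r hprod).pow_left (horth x hx x hx)
        (horth y hy y hy) (horth z hz z hz) (horth x hx y hy) (horth y hy z hz) (horth x hx z hz))
      ((abs_triple_product_le (hmem x hx).1 (hmem y hy).1 (hmem z hz).1).trans_lt ?_)
    exact_mod_cast hM3
  refine (card_le_two_or_exists_normal (pow_ne_zero r (by exact_mod_cast hp.ne'))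
    (fun x hx => (hmem x hx).2.1) (fun x hx => (hmem x hx).1) hcross horth hdet).imp_right ?_
  rintro ⟨w, hw0, hwQ, hwM, hcard, hxw⟩
  rw [Int.natAbs_pow, Int.natAbs_natCast] at hwM hcard
  have hheight : 0 < height w := height_pos.2 hw0
  refine ⟨w, mem_smallZeros.2 ⟨?_, hw0, hwQ⟩, hxw, ?_⟩
  · rwa [Nat.le_div_iff_mul_le (pow_pos hp r), mul_comm]
  · rw [div_mul_div_comm, mul_one, le_div_iff₀ (by positivity)]
    exact_mod_cast hcard

lemma card_classes_le_two_of_coplanar (hp2 : p ≠ 2) (ha : ∀ i, ¬ (p : ℤ) ∣ a i)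
    {S : Finset (Fin 3 → ℤ)} (hS : S ⊆ primZeros (((p : ℤ) ^ r) ^ 2) a M) {κ : Type*}
    {key : (Fin 3 → ℤ) → κ}
    (hkey : ∀ x ∈ S, ∀ y ∈ S, (∀ j, (p : ℤ) ^ r ∣ (x ⨯₃ y) j) → key x = key y)
    {w : Fin 3 → ℤ} (hw : w ≠ 0) {B : Finset κ}
    (hB : ∀ k ∈ B, ∃ x ∈ S, key x = k ∧ x ⬝ᵥ w = 0) : B.card ≤ 2 := by
  by_contra! hB2
  obtain ⟨k₁, h₁, k₂, h₂, k₃, h₃, h₁₂, h₁₃, h₂₃⟩ := Finset.two_lt_card.1 hB2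
  obtain ⟨x, hx, rfl, hxw⟩ := hB k₁ h₁
  obtain ⟨y, hy, rfl, hyw⟩ := hB k₂ h₂
  obtain ⟨z, hz, rfl, hzw⟩ := hB k₃ h₃
  have hmem (x) (hx : x ∈ S) := mem_primZeros.1 (hS hx)
  rcases exists_dvd_cross_of_coplanar prime_intCast (not_dvd_two hp2) ha hw (hmem x hx).2.1
    hxw hyw hzw (hmem x hx).2.2 (hmem y hy).2.2 (hmem z hz).2.2 with h | h | h
  · exact h₁₂ (hkey x hx y hy h)
  · exact h₁₃ (hkey x hx z hz h)
  · exact h₂₃ (hkey y hy z hz h)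

/-- Each projective class modulo `p ^ r` with more than two points yields the normal of a plane, a
small zero of the adjoint form, and each such normal arises from at most two classes. -/
lemma card_le_of_residue_class (hp2 : p ≠ 2) (hr : r ≠ 0) (ha : ∀ i, ¬ (p : ℤ) ∣ a i)
    (hM3 : 6 * M ^ 3 < (p ^ r) ^ 3) {S : Finset (Fin 3 → ℤ)}
    (hS : S ⊆ primZeros (((p : ℤ) ^ r) ^ 2) a M)
    (hres : ∀ x ∈ S, ∀ y ∈ S, ∀ j, x j ≡ y j [ZMOD p]) :
    (S.card : ℝ) ≤ 2 * (p : ℝ) ^ r + 60 * (M : ℝ) ^ 2 / (p : ℝ) ^ r *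
      ∑ w ∈ smallZeros (((p : ℤ) ^ r) ^ 2) (adjCoeff a) (2 * M ^ 2 / p ^ r),
        1 / (height w : ℝ) := by
  rcases S.eq_empty_or_nonempty with rfl | ⟨τ, hτ⟩
  · rw [Finset.card_empty, Nat.cast_zero]
    positivity
  have hmem (x) (hx : x ∈ S) := mem_primZeros.1 (hS hx)
  have hdvd : (p : ℤ) ^ r ∣ ((p : ℤ) ^ r) ^ 2 := dvd_pow_self _ two_ne_zero
  obtain ⟨i, hi⟩ := (hmem τ hτ).2.1.exists_not_dvd (prime_intCast (p := p)).not_isUnit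
  obtain ⟨κ, hκ⟩ := exists_projective_class_map (r := r) hp2 ha hi
    ((dvd_pow_self _ hr).trans (hdvd.trans (hmem τ hτ).2.2))
  have hκS (x) (hx : x ∈ S) (y) (hy : y ∈ S) :=
    hκ x y (hres x hx τ hτ) (hres y hy τ hτ) (hdvd.trans (hmem x hx).2.2)
      (hdvd.trans (hmem y hy).2.2)
  have : NeZero (p ^ r) := ⟨(pow_pos (Fact.out : p.Prime).pos r).ne'⟩
  have hcard := card_le_of_forall_fiber_le_or (S := S) (c := 2) (d := 2)
    (W := smallZeros (((p : ℤ) ^ r) ^ 2) (adjCoeff a) (2 * M ^ 2 / p ^ r)) κ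
    (fun k w => ∃ x ∈ S, κ x = k ∧ x ⬝ᵥ w = 0)
    (f := fun w => 30 * (M : ℝ) ^ 2 / (p : ℝ) ^ r * (1 / (height w : ℝ)))
    (fun w _ => by positivity) (fun k => ?_) (fun w hw B hB => ?_)
  · rw [ZMod.card, ← Finset.mul_sum] at hcard
    push_cast at hcard
    exact hcard.trans_eq (by ring)
  · have hfib (x) (hx : x ∈ ({x ∈ S | κ x = k} : Finset _)) : x ∈ S ∧ κ x = k :=
      Finset.mem_filter.1 hx
    refine (card_le_two_or_exists_adjCoeff_zero hp2 ha hM3 (fun x hx => hS (hfib x hx).1)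
      (fun x hx h => hi ((Int.ModEq.dvd_iff (hres x (hfib x hx).1 τ hτ i)).1 h))
      (fun x hx y hy => (hκS x (hfib x hx).1 y (hfib y hy).1).1
        ((hfib x hx).2.trans (hfib y hy).2.symm))).imp_right ?_
    rintro ⟨w, hw, ⟨x, hx, hxw⟩, hle⟩
    exact ⟨w, hw, ⟨x, (hfib x hx).1, (hfib x hx).2, hxw⟩, hle⟩
  · exact card_classes_le_two_of_coplanar hp2 ha hS (fun x hx y hy => (hκS x hx y hy).2)
      (mem_smallZeros.1 hw).2.1 hB

end ResidueClass

section HarmonicSums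

lemma monotone_harmonic : Monotone harmonic :=
  monotone_nat_of_le_succ fun n => by
    rw [harmonic_succ]
    exact le_add_of_nonneg_right (by positivity)

lemma harmonic_cast_le {m n : ℕ} (h : m ≤ n) : (harmonic m : ℝ) ≤ harmonic n := by
  exact_mod_cast monotone_harmonic h

lemma harmonic_nonneg (n : ℕ) : (0 : ℝ) ≤ harmonic n := by
  exact_mod_cast harmonic_zero ▸ monotone_harmonic n.zero_le

lemma one_div_eq_sum_one_div_mul_succ_add {a A : ℕ} (ha : 1 ≤ a) (haA : a ≤ A) :
    1 / (a : ℝ) = ∑ b ∈ Finset.Icc a A, 1 / ((b : ℝ) * (b + 1)) + 1 / ((A : ℝ) + 1) := by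
  induction A, haA using Nat.le_induction with
  | base =>
    rw [Finset.Icc_self, Finset.sum_singleton]
    field_simp
    ring
  | succ n hn ih =>
    rw [Finset.sum_Icc_succ_top (by lia), ih]
    push_cast
    field_simp
    ring

lemma sum_one_div_le_mul_harmonic_add_one {β : Type*} {D : ℝ} {A : ℕ} (hD : 0 ≤ D)
    {T : Finset β} {h : β → ℕ} (hpos : ∀ w ∈ T, 0 < h w) (hT : ∀ w ∈ T, h w ≤ A)
    (hcard : ∀ B ≤ A, (Finset.card {w ∈ T | h w ≤ B} : ℝ) ≤ D * B) :
    ∑ w ∈ T, 1 / (h w : ℝ) ≤ D * (harmonic A + 1) := by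
  have hsplit (w) (hw : w ∈ T) : 1 / (h w : ℝ) =
      ∑ b ∈ Finset.Icc 1 A, (if h w ≤ b then 1 / ((b : ℝ) * (b + 1)) else 0)
        + 1 / ((A : ℝ) + 1) := by
    rw [one_div_eq_sum_one_div_mul_succ_add (hpos w hw) (hT w hw), ← Finset.sum_filter]
    congr 2
    ext b
    have := hpos w hw
    rw [Finset.mem_filter, Finset.mem_Icc, Finset.mem_Icc]
    lia
  have hinner (b) (hb : b ∈ Finset.Icc 1 A) :
      ∑ w ∈ T, (if h w ≤ b then 1 / ((b : ℝ) * (b + 1)) else 0) ≤ D * (b : ℝ)⁻¹ := by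
    obtain ⟨hb1, hbA⟩ := Finset.mem_Icc.1 hb
    have hb0 : (b : ℝ) ≠ 0 := by exact_mod_cast Nat.one_le_iff_ne_zero.1 hb1
    rw [← Finset.sum_filter, Finset.sum_const, nsmul_eq_mul]
    calc _ ≤ D * b * (1 / ((b : ℝ) * (b + 1))) := by gcongr; exact hcard b hbA
      _ ≤ D * b * (1 / ((b : ℝ) * b)) := by gcongr; exact le_add_of_nonneg_right zero_le_one
      _ = D * (b : ℝ)⁻¹ := by field_simp
  have hlast : ∑ w ∈ T, 1 / ((A : ℝ) + 1) ≤ D := by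
    have hcardA := hcard A le_rfl
    rw [Finset.filter_true_of_mem hT] at hcardA
    rw [Finset.sum_const, nsmul_eq_mul, mul_one_div, div_le_iff₀ (by positivity)]
    linarith
  rw [Finset.sum_congr rfl hsplit, Finset.sum_add_distrib, Finset.sum_comm]
  calc _ ≤ ∑ b ∈ Finset.Icc 1 A, D * (b : ℝ)⁻¹ + D := add_le_add (Finset.sum_le_sum hinner) hlast
    _ = D * (harmonic A + 1) := by
        rw [harmonic_eq_sum_Icc, ← Finset.mul_sum]
        push_cast
        ring

end HarmonicSums

section PrimBound

/-- The bound `D * A` for the number of primitive zeros of height at most `A` of a diagonal form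
modulo `p ^ (2 * m)`, uniformly in the form and in `m` as long as `K * A ≤ p ^ m`. -/
def PrimBound (p : ℕ) (K D : ℝ) (A : ℕ) : Prop :=
  ∀ (m : ℕ) (a : Fin 3 → ℤ), (∀ i, ¬ (p : ℤ) ∣ a i) → K * A ≤ (p : ℝ) ^ m →
    ((primZeros (((p : ℤ) ^ m) ^ 2) a A).card : ℝ) ≤ D * A

variable {p : ℕ} [Fact p.Prime] {K D : ℝ} {A M r : ℕ} {a : Fin 3 → ℤ}

lemma sq_pow_dvd_of_sq_pow_dvd_mul {s : ℕ} (hs : s ≠ 0) {Q : ℤ}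
    (h : ((p : ℤ) ^ r) ^ 2 ∣ (s : ℤ) ^ 2 * Q) : ((p : ℤ) ^ (r - padicValNat p s)) ^ 2 ∣ Q := by
  set j := padicValNat p s
  obtain ⟨u, hu⟩ : p ^ j ∣ s := pow_padicValNat_dvd
  have hpu : ¬ (p : ℤ) ∣ u := by
    rintro hpu
    refine pow_succ_padicValNat_not_dvd (p := p) hs ?_
    have hdvd : p ^ j * p ∣ p ^ j * u := mul_dvd_mul_left _ (by exact_mod_cast hpu)
    rwa [← hu, ← pow_succ] at hdvd
  rcases le_total r j with hrj | hjr
  · rw [Nat.sub_eq_zero_of_le hrj, pow_zero, one_pow]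
    exact one_dvd Q
  · rw [hu, ← Nat.add_sub_cancel' hjr, Nat.cast_mul, Nat.cast_pow, pow_add, mul_pow, mul_pow,
      mul_assoc] at h
    have hp0 : (p : ℤ) ^ j ≠ 0 := pow_ne_zero j prime_intCast.ne_zero
    exact ((isCoprime_pow_of_not_dvd (r - j) hpu).pow).dvd_of_dvd_mul_left
      ((mul_dvd_mul_iff_left (pow_ne_zero 2 hp0)).1 h)

lemma mem_smallZeros_of_smul_mem {s : ℕ} (hs : s ≠ 0) {y : Fin 3 → ℤ}
    (h : (s : ℤ) • y ∈ smallZeros (((p : ℤ) ^ r) ^ 2) a A) :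
    y ∈ smallZeros (((p : ℤ) ^ (r - padicValNat p s)) ^ 2) a (A / s) := by
  obtain ⟨hA, h0, hQ⟩ := mem_smallZeros.1 h
  rw [height_smul, Int.natAbs_natCast] at hA
  rw [diagBilin_smul_self] at hQ
  refine mem_smallZeros.2 ⟨?_, right_ne_zero_of_smul h0, sq_pow_dvd_of_sq_pow_dvd_mul hs hQ⟩
  rwa [Nat.le_div_iff_mul_le hs.bot_lt, mul_comm]

lemma mul_div_le_pow_sub_padicValNat (hK : 0 ≤ K) (hA : K * A ≤ (p : ℝ) ^ r) {s : ℕ}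
    (hs : s ≠ 0) : K * (A / s : ℕ) ≤ (p : ℝ) ^ (r - padicValNat p s) := by
  have hs0 : (0 : ℝ) < s := by exact_mod_cast hs.bot_lt
  have hp1 : (1 : ℝ) ≤ p := by exact_mod_cast (Fact.out : p.Prime).one_le
  have hle : (p : ℝ) ^ padicValNat p s ≤ s := by
    exact_mod_cast Nat.le_of_dvd hs.bot_lt pow_padicValNat_dvd
  calc K * (A / s : ℕ) ≤ K * (A / s) := by gcongr; exact Nat.cast_div_le
    _ = K * A / s := by ring
    _ ≤ (p : ℝ) ^ (r - padicValNat p s) * (p : ℝ) ^ padicValNat p s / s := by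
        refine div_le_div_of_nonneg_right ?_ hs0.le
        rw [← pow_add]
        exact hA.trans (pow_le_pow_right₀ hp1 le_tsub_add)
    _ ≤ (p : ℝ) ^ (r - padicValNat p s) * s / s := by gcongr
    _ = (p : ℝ) ^ (r - padicValNat p s) := mul_div_cancel_right₀ _ hs0.ne'

lemma smallZeros_subset_biUnion :
    smallZeros (((p : ℤ) ^ r) ^ 2) a A ⊆ (Finset.Icc 1 A).biUnion fun s =>
      (primZeros (((p : ℤ) ^ (r - padicValNat p s)) ^ 2) a (A / s)).image ((s : ℤ) • ·) := by
  intro w hw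
  obtain ⟨hA, h0, -⟩ := mem_smallZeros.1 hw
  obtain ⟨s, y, hs, hy, rfl⟩ := exists_pos_smul_isPrimVec h0
  rw [height_smul, Int.natAbs_natCast] at hA
  obtain ⟨hyA, -, hyQ⟩ := mem_smallZeros.1 (mem_smallZeros_of_smul_mem hs.ne' hw)
  refine Finset.mem_biUnion.2 ⟨s, Finset.mem_Icc.2 ⟨hs, ?_⟩, Finset.mem_image_of_mem _ ?_⟩
  · exact (Nat.le_mul_of_pos_right s (height_pos.2 hy.ne_zero)).trans hA
  · exact mem_primZeros.2 ⟨hyA, hy, hyQ⟩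

lemma card_smallZeros_le (hK : 0 ≤ K) (hD : 0 ≤ D) (hprim : ∀ B ≤ A, PrimBound p K D B)
    (ha : ∀ i, ¬ (p : ℤ) ∣ a i) (hA : K * A ≤ (p : ℝ) ^ r) :
    ((smallZeros (((p : ℤ) ^ r) ^ 2) a A).card : ℝ) ≤ D * harmonic A * A := by
  have hterm (s) (hs : s ∈ Finset.Icc 1 A) :
      (((primZeros (((p : ℤ) ^ (r - padicValNat p s)) ^ 2) a (A / s)).image
        ((s : ℤ) • ·)).card : ℝ) ≤ D * A * (s : ℝ)⁻¹ := by
    have hs0 : s ≠ 0 := Nat.one_le_iff_ne_zero.1 (Finset.mem_Icc.1 hs).1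
    calc _ ≤ ((primZeros (((p : ℤ) ^ (r - padicValNat p s)) ^ 2) a (A / s)).card : ℝ) := by
          exact_mod_cast Finset.card_image_le
      _ ≤ D * (A / s : ℕ) := hprim _ (Nat.div_le_self _ _) _ a ha
          (mul_div_le_pow_sub_padicValNat hK hA hs0)
      _ ≤ D * (A / s) := by gcongr; exact Nat.cast_div_le
      _ = D * A * (s : ℝ)⁻¹ := by ring
  calc _ ≤ ∑ s ∈ Finset.Icc 1 A, (((primZeros (((p : ℤ) ^ (r - padicValNat p s)) ^ 2) a
          (A / s)).image ((s : ℤ) • ·)).card : ℝ) := by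
        exact_mod_cast (Finset.card_le_card smallZeros_subset_biUnion).trans Finset.card_biUnion_le
    _ ≤ ∑ s ∈ Finset.Icc 1 A, D * A * (s : ℝ)⁻¹ := Finset.sum_le_sum hterm
    _ = D * harmonic A * A := by
        rw [harmonic_eq_sum_Icc, ← Finset.mul_sum]
        push_cast
        ring

lemma sum_one_div_height_smallZeros_le (hK : 0 ≤ K) (hD : 0 ≤ D)
    (hprim : ∀ B ≤ A, PrimBound p K D B) (ha : ∀ i, ¬ (p : ℤ) ∣ a i)
    (hA : K * A ≤ (p : ℝ) ^ r) :
    ∑ w ∈ smallZeros (((p : ℤ) ^ r) ^ 2) a A, 1 / (height w : ℝ) ≤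
      D * harmonic A * (harmonic A + 1) := by
  have hharm := harmonic_nonneg A
  refine sum_one_div_le_mul_harmonic_add_one (by positivity)
    (fun w hw => height_pos.2 (mem_smallZeros.1 hw).2.1) (fun w hw => (mem_smallZeros.1 hw).1)
    fun B hB => ?_
  rw [filter_height_le_smallZeros hB]
  calc _ ≤ D * harmonic B * B := card_smallZeros_le hK hD (fun B' hB' => hprim B' (hB'.trans hB)) ha
        (hA.trans' (by gcongr))
    _ ≤ D * harmonic A * B := by gcongr; exact monotone_harmonic hB

lemma not_dvd_adjCoeff (ha : ∀ i, ¬ (p : ℤ) ∣ a i) (i : Fin 3) : ¬ (p : ℤ) ∣ adjCoeff a i := by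
  have hmul (j k : Fin 3) : ¬ (p : ℤ) ∣ a j * a k := fun h =>
    (prime_intCast.dvd_or_dvd h).elim (ha j) (ha k)
  fin_cases i <;> exact hmul _ _

lemma card_primZeros_le (hp2 : p ≠ 2) (hr : r ≠ 0) (ha : ∀ i, ¬ (p : ℤ) ∣ a i)
    (hM3 : 6 * M ^ 3 < (p ^ r) ^ 3) :
    ((primZeros (((p : ℤ) ^ r) ^ 2) a M).card : ℝ) ≤
      (p : ℝ) ^ 3 * (2 * (p : ℝ) ^ r + 60 * ((M : ℝ) ^ 2 / (p : ℝ) ^ r) *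
        ∑ w ∈ smallZeros (((p : ℤ) ^ r) ^ 2) (adjCoeff a) (2 * M ^ 2 / p ^ r),
          1 / (height w : ℝ)) := by
  set S := primZeros (((p : ℤ) ^ r) ^ 2) a M
  set reduce : (Fin 3 → ℤ) → Fin 3 → ZMod p := fun x j => x j
  have hfib (κ : Fin 3 → ZMod p) := card_le_of_residue_class hp2 hr ha hM3
    (S := {x ∈ S | reduce x = κ}) (Finset.filter_subset _ _) fun x hx y hy j =>
      (ZMod.intCast_eq_intCast_iff _ _ p).1 (congrFun
        ((Finset.mem_filter.1 hx).2.trans (Finset.mem_filter.1 hy).2.symm) j)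
  calc (S.card : ℝ) = ∑ κ, (Finset.card {x ∈ S | reduce x = κ} : ℝ) := by
        exact_mod_cast Finset.card_eq_sum_card_fiberwise fun x _ => Finset.mem_univ (reduce x)
    _ ≤ _ := Finset.sum_le_sum fun κ _ => hfib κ
    _ = _ := by
        rw [Finset.sum_const, Finset.card_univ, Fintype.card_fun, ZMod.card, Fintype.card_fin,
          nsmul_eq_mul, Nat.cast_pow, mul_div_assoc]

lemma exists_le_pow_le_mul {b x : ℝ} (hb : 0 ≤ b) (hx : 1 < x) {m : ℕ} (hxm : x ≤ b ^ m) :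
    ∃ r ≤ m, r ≠ 0 ∧ x ≤ b ^ r ∧ b ^ r ≤ b * x := by
  classical
  have hex : ∃ r, x ≤ b ^ r := ⟨m, hxm⟩
  have hr0 : Nat.find hex ≠ 0 := by
    rw [Ne, Nat.find_eq_zero, pow_zero, not_le]
    exact hx
  obtain ⟨k, hk⟩ := Nat.exists_eq_succ_of_ne_zero hr0
  refine ⟨Nat.find hex, Nat.find_min' hex hxm, hr0, Nat.find_spec hex, ?_⟩
  rw [hk, pow_succ']
  gcongr
  exact (not_le.1 (Nat.find_min hex (by lia))).le

lemma primBound_zero (p : ℕ) (K D : ℝ) : PrimBound p K D 0 := by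
  intro m a _ _
  suffices h : primZeros (((p : ℤ) ^ m) ^ 2) a 0 = ∅ by
    rw [h, Finset.card_empty, Nat.cast_zero, mul_zero]
  refine Finset.eq_empty_of_forall_notMem fun x hx => ?_
  obtain ⟨hx0, hprim, -⟩ := mem_primZeros.1 hx
  exact hprim.ne_zero (height_eq_zero.1 (Nat.le_zero.1 hx0))

/-- The normals governing the zeros of height `M` have height `A = 2 M ^ 2 / p ^ r < M`, where
`p ^ r` is comparable to `K * M`, so the bound for `M` follows from those for smaller heights. -/
lemma primBound_of_forall_lt (hp2 : p ≠ 2) (hK3 : 3 ≤ K)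
    (hK : 120 * (p : ℝ) ^ 3 * (harmonic M * (harmonic M + 1)) ≤ K)
    (ih : ∀ B < M, PrimBound p K (4 * (p : ℝ) ^ 4 * K) B) :
    PrimBound p K (4 * (p : ℝ) ^ 4 * K) M := by
  rcases M.eq_zero_or_pos with rfl | hM
  · exact primBound_zero p K _
  intro m a ha hKM
  have hp : 0 < p := (Fact.out : p.Prime).pos
  have hM1 : (1 : ℝ) ≤ M := by exact_mod_cast hM
  obtain ⟨r, hrm, hr0, hr, hrle⟩ := exists_le_pow_le_mul p.cast_nonneg (by nlinarith) hKM
  have h3M : 3 * M ≤ p ^ r := by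
    have : 3 * (M : ℝ) ≤ (p : ℝ) ^ r := hr.trans' (by gcongr)
    exact_mod_cast this
  have hM3 : 6 * M ^ 3 < (p ^ r) ^ 3 :=
    calc 6 * M ^ 3 < (3 * M) ^ 3 := by rw [mul_pow]; gcongr; norm_num
      _ ≤ (p ^ r) ^ 3 := Nat.pow_le_pow_left h3M 3
  have hAM : 2 * M ^ 2 / p ^ r < M := by
    rw [Nat.div_lt_iff_lt_mul (pow_pos hp r)]
    nlinarith
  set A := 2 * M ^ 2 / p ^ r
  have hharmA := harmonic_nonneg A
  have hharmAM : (harmonic A : ℝ) ≤ harmonic M := harmonic_cast_le hAM.le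
  have hsum := sum_one_div_height_smallZeros_le (r := r) (by linarith : 0 ≤ K)
    (by positivity : 0 ≤ 4 * (p : ℝ) ^ 4 * K) (fun B hB => ih B (hB.trans_lt hAM))
    (not_dvd_adjCoeff ha) (hr.trans' (by gcongr))
  have hratio : (M : ℝ) ^ 2 / (p : ℝ) ^ r ≤ M / K := by
    rw [div_le_div_iff₀ (by positivity) (by linarith)]
    nlinarith
  have hharmM := hharmA.trans hharmAM
  have hsub := primZeros_subset_of_dvd (pow_dvd_pow_of_dvd (pow_dvd_pow (p : ℤ) hrm) 2) a M
  calc ((primZeros (((p : ℤ) ^ m) ^ 2) a M).card : ℝ)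
      ≤ (primZeros (((p : ℤ) ^ r) ^ 2) a M).card := by exact_mod_cast Finset.card_le_card hsub
    _ ≤ _ := card_primZeros_le hp2 hr0 ha hM3
    _ ≤ (p : ℝ) ^ 3 * (2 * (p * (K * M)) + 60 * (M / K) *
          (4 * (p : ℝ) ^ 4 * K * harmonic M * (harmonic M + 1))) := by
        gcongr
        exact hsum.trans (by gcongr)
    _ = 2 * (p : ℝ) ^ 4 * K * M +
          2 * (p : ℝ) ^ 4 * M * (120 * (p : ℝ) ^ 3 * (harmonic M * (harmonic M + 1))) := by
        field_simp
        ring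
    _ ≤ 2 * (p : ℝ) ^ 4 * K * M + 2 * (p : ℝ) ^ 4 * M * K := by gcongr
    _ = 4 * (p : ℝ) ^ 4 * K * M := by ring

theorem primBound_of_le (hp2 : p ≠ 2) (hK3 : 3 ≤ K)
    (hK : 120 * (p : ℝ) ^ 3 * (harmonic M * (harmonic M + 1)) ≤ K) :
    ∀ A ≤ M, PrimBound p K (4 * (p : ℝ) ^ 4 * K) A := by
  intro A
  induction A using Nat.strong_induction_on with
  | _ A ih =>
    intro hAM
    have hA := harmonic_nonneg A
    have hM := harmonic_nonneg M
    have hle : (harmonic A : ℝ) ≤ harmonic M := harmonic_cast_le hAM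
    exact primBound_of_forall_lt hp2 hK3 (hK.trans' (by gcongr))
      fun B hB => ih B hB (hB.le.trans hAM)

lemma card_filter_dvd_smallZeros_mul_pow_le (hK : 0 ≤ K) (hD : 0 ≤ D)
    (hprim : ∀ B ≤ M, PrimBound p K D B) (ha : ∀ i, ¬ (p : ℤ) ∣ a i)
    (hM : K * M ≤ (p : ℝ) ^ r) (j : ℕ) :
    (Finset.card {w ∈ smallZeros (((p : ℤ) ^ r) ^ 2) a M | ∀ i, (p : ℤ) ^ j ∣ w i} : ℝ) *
      (p : ℝ) ^ j ≤ D * harmonic M * M := by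
  have hpj : p ^ j ≠ 0 := pow_ne_zero j (Fact.out : p.Prime).ne_zero
  have hharm := harmonic_nonneg M
  have hsub : {w ∈ smallZeros (((p : ℤ) ^ r) ^ 2) a M | ∀ i, (p : ℤ) ^ j ∣ w i} ⊆
      (smallZeros (((p : ℤ) ^ (r - padicValNat p (p ^ j))) ^ 2) a (M / p ^ j)).image
        (((p ^ j : ℕ) : ℤ) • ·) := by
    intro w hw
    obtain ⟨hw, hdvd⟩ := Finset.mem_filter.1 hw
    choose y hy using hdvd
    obtain rfl : w = ((p ^ j : ℕ) : ℤ) • y := funext fun i => by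
      rw [hy, Pi.smul_apply, smul_eq_mul, Nat.cast_pow]
    exact Finset.mem_image_of_mem _ (mem_smallZeros_of_smul_mem hpj hw)
  have hcard := card_smallZeros_le hK hD (fun B hB => hprim B (hB.trans (Nat.div_le_self _ _))) ha
    (mul_div_le_pow_sub_padicValNat hK hM hpj)
  calc _ ≤ D * harmonic (M / p ^ j) * (M / p ^ j : ℕ) * (p : ℝ) ^ j := by
        gcongr
        refine hcard.trans' ?_
        exact_mod_cast (Finset.card_le_card hsub).trans Finset.card_image_le
    _ ≤ D * harmonic M * (M / p ^ j : ℕ) * (p : ℝ) ^ j := by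
        gcongr
        exact monotone_harmonic (Nat.div_le_self M (p ^ j))
    _ ≤ D * harmonic M * M := by
        rw [mul_assoc _ (_ : ℝ) ((p : ℝ) ^ j)]
        gcongr
        exact_mod_cast Nat.div_mul_le_self M (p ^ j)

end PrimBound

section UnitSolutions

variable {ι R : Type*} [Fintype ι] [DecidableEq ι] [CommRing R] [Fintype R]

open Classical in
/-- The zeros of a diagonal quadratic form all of whose coordinates are units. -/
noncomputable def unitSols (a : ι → R) : Finset (ι → R) :=
  {x | (∀ i, IsUnit (x i)) ∧ diagBilin a x x = 0}

lemma mem_unitSols {a x : ι → R} :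
    x ∈ unitSols a ↔ (∀ i, IsUnit (x i)) ∧ diagBilin a x x = 0 := by
  classical exact Finset.mem_filter_univ _

lemma smul_mem_unitSols {a x : ι → R} (c : Rˣ) (hx : x ∈ unitSols a) :
    (c : R) • x ∈ unitSols a := by
  obtain ⟨hunit, hQ⟩ := mem_unitSols.1 hx
  exact mem_unitSols.2 ⟨fun i => c.isUnit.mul (hunit i), by rw [diagBilin_smul_self, hQ, mul_zero]⟩

/-- The exponential sum at the frequency `m` over the unit zeros of a diagonal quadratic form. -/
noncomputable def unitExpSum (ψ : AddChar R ℂ) (a m : ι → R) : ℂ :=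
  ∑ x ∈ unitSols a, ψ (m ⬝ᵥ x)

end UnitSolutions

section CriticalPoints

lemma addChar_dotProduct {ι R : Type*} [Fintype ι] [CommRing R] (ψ : AddChar R ℂ) (x y : ι → R) :
    ψ (x ⬝ᵥ y) = ∏ i, ψ (x i * y i) :=
  map_prod (M := Multiplicative R) ψ.toMonoidHom (fun i => Multiplicative.ofAdd (x i * y i)) _

/-- If permutations `T g` of `S` multiply `φ` by factors `χ g`, then averaging over `g` kills the
points at which the `χ g` cancel. -/
lemma sum_eq_sum_filter_of_average {α G : Type*} [Fintype G] [Nonempty G] {S : Finset α}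
    {φ : α → ℂ} {T : G → α → α} {χ : G → α → ℂ} {good : α → Prop} [DecidablePred good]
    (hT : ∀ g, ∑ x ∈ S, φ (T g x) = ∑ x ∈ S, φ x)
    (hχ : ∀ g, ∀ x ∈ S, φ (T g x) = φ x * χ g x)
    (hgood : ∀ x ∈ S, ∑ g, χ g x = if good x then (Fintype.card G : ℂ) else 0) :
    ∑ x ∈ S, φ x = ∑ x ∈ S with good x, φ x := by
  have hcard : (Fintype.card G : ℂ) ≠ 0 := by exact_mod_cast Fintype.card_ne_zero
  refine mul_left_cancel₀ hcard ?_
  calc (Fintype.card G : ℂ) * ∑ x ∈ S, φ x = ∑ g : G, ∑ x ∈ S, φ (T g x) := by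
        rw [Finset.sum_congr rfl fun g _ => hT g, Finset.sum_const, Finset.card_univ, nsmul_eq_mul]
    _ = ∑ g : G, ∑ x ∈ S, φ x * χ g x :=
        Finset.sum_congr rfl fun g _ => Finset.sum_congr rfl (hχ g)
    _ = ∑ x ∈ S, φ x * ∑ g, χ g x := by
        rw [Finset.sum_comm]
        simp only [Finset.mul_sum]
    _ = ∑ x ∈ S, if good x then (Fintype.card G : ℂ) * φ x else 0 :=
        Finset.sum_congr rfl fun x hx => by rw [hgood x hx]; split_ifs <;> ring
    _ = _ := by rw [← Finset.sum_filter, Finset.mul_sum]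

variable {R : Type*} [CommRing R]

lemma smul_cross_eq_zero_iff {t : R} {x y : Fin 3 → R} :
    t • (x ⨯₃ y) = 0 ↔ ∀ u v, t * (x u * y v - x v * y u) = 0 := by
  rw [← LinearMap.smul_apply, ← map_smul, cross_eq_zero_iff]
  refine forall₂_congr fun u v => ?_
  rw [Pi.smul_apply, Pi.smul_apply, smul_eq_mul, smul_eq_mul, mul_assoc, mul_assoc, mul_sub,
    sub_eq_zero]

/-- The transvection `x ↦ x + t (a x × u)`, which preserves the diagonal form with coefficients `a`
to first order in `t`. -/
def shear (a : Fin 3 → R) (t : R) (u x : Fin 3 → R) : Fin 3 → R :=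
  x + t • ((a * x) ⨯₃ u)

lemma diagBilin_shear {t : R} (ht : t ^ 2 = 0) (a u x : Fin 3 → R) :
    diagBilin a (shear a t u x) (shear a t u x) = diagBilin a x x := by
  have horth : diagBilin a x ((a * x) ⨯₃ u) = 0 := by
    rw [diagBilin_eq_dotProduct, dot_self_cross]
  rw [shear, map_add (diagBilin a), LinearMap.add_apply, map_add, map_add,
    diagBilin_comm a (t • _) x, map_smul, horth, diagBilin_smul_self, ht, smul_zero, zero_mul,
    add_zero, add_zero, add_zero]

lemma shear_neg_shear {t : R} (ht : t ^ 2 = 0) (a u x : Fin 3 → R) :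
    shear a t (-u) (shear a t u x) = x := by
  simp only [shear, mul_add, mul_smul_comm, map_add, map_smul, map_neg, LinearMap.add_apply,
    LinearMap.smul_apply, smul_add, smul_neg, smul_smul, ← sq, ht, zero_smul]
  abel

lemma dotProduct_shear (a m u x : Fin 3 → R) (t : R) :
    m ⬝ᵥ shear a t u x = m ⬝ᵥ x + u ⬝ᵥ (t • (m ⨯₃ (a * x))) := by
  rw [shear, dotProduct_add, dotProduct_smul, dotProduct_smul, triple_product_permutation u]

/-- At a critical point `m` is proportional to `a x` modulo `d`, where `d = ann t`, and the adjoint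
form at `a x` is `a₀ a₁ a₂` times the original form at `x`. -/
lemma mul_diagBilin_adjCoeff_eq_zero {π t d : R} (hann : ∀ c : R, t * c = 0 → d ∣ c)
    (hπd : π * d ^ 2 = 0) {a m x : Fin 3 → R} (ha : IsUnit (a 0)) (hx : IsUnit (x 0))
    (hQ : diagBilin a x x = 0) (hcross : t • (m ⨯₃ (a * x)) = 0) (hdot : π * (m ⬝ᵥ x) = 0) :
    π * diagBilin (adjCoeff a) m m = 0 := by
  have hzero := smul_cross_eq_zero_iff.1 hcross
  obtain ⟨v₁, hv₁⟩ := hann _ (hzero 0 1)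
  obtain ⟨v₂, hv₂⟩ := hann _ (hzero 2 0)
  refine ((ha.mul hx).pow 2).mul_left_cancel ?_
  rw [dotProduct, Fin.sum_univ_three] at hdot
  rw [diagBilin_apply, Fin.sum_univ_three] at hQ ⊢
  simp only [adjCoeff, cons_val_zero, cons_val_one, cons_val, Pi.mul_apply] at hv₁ hv₂ ⊢
  linear_combination (-(π * m 0 ^ 2 * (a 0 * a 1 * a 2))) * hQ
    + 2 * m 0 * (a 0 * a 1 * a 2) * (a 0 * x 0) * hdot
    + (a 0 * a 2 * v₁ ^ 2 + a 0 * a 1 * v₂ ^ 2) * hπd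
    + π * (a 0 * a 2) * (m 0 * (a 1 * x 1) - m 1 * (a 0 * x 0) + d * v₁) * hv₁
    + π * (a 0 * a 1) * (m 2 * (a 0 * x 0) - m 0 * (a 2 * x 2) + d * v₂) * hv₂

lemma mul_mul_sub_eq_zero_of_smul_cross_eq_zero {t d : R} {a m x y : Fin 3 → R} {i k : Fin 3}
    (hm : IsUnit (m i)) (ha : IsUnit (a k)) (hx : t • ((d • m) ⨯₃ (a * x)) = 0)
    (hy : t • ((d • m) ⨯₃ (a * y)) = 0) (hxy : x i = y i) : t * d * (x k - y k) = 0 := by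
  have hxik := smul_cross_eq_zero_iff.1 hx i k
  have hyik := smul_cross_eq_zero_iff.1 hy i k
  simp only [Pi.smul_apply, Pi.mul_apply, smul_eq_mul] at hxik hyik
  refine ((hm.mul ha).mul_right_eq_zero).1 ?_
  rw [← hxy] at hyik
  linear_combination hxik - hyik

section

variable [Finite R] {ψ : AddChar R ℂ}

lemma norm_sum_addChar_le_card {α : Type*} (ψ : AddChar R ℂ) (S : Finset α) (f : α → R) :
    ‖∑ x ∈ S, ψ (f x)‖ ≤ S.card :=
  (norm_sum_le _ _).trans_eq <| by
    rw [Finset.sum_congr rfl fun x _ => ψ.norm_apply (f x), Finset.sum_const, nsmul_one]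

lemma sum_addChar_eq_sum_mul_dotProduct_eq_zero [DecidableEq R] {ι : Type*} [Fintype ι]
    (hψ : ψ.IsPrimitive) {π : R} (hπ : IsNilpotent π) {S : Finset (ι → R)}
    (hS : ∀ c : Rˣ, ∀ x ∈ S, (c : R) • x ∈ S) (m : ι → R) :
    ∑ x ∈ S, ψ (m ⬝ᵥ x) = ∑ x ∈ S with π * (m ⬝ᵥ x) = 0, ψ (m ⬝ᵥ x) := by
  have := Fintype.ofFinite R
  refine sum_eq_sum_filter_of_average (T := fun v x => (1 + π * v) • x)
    (χ := fun v x => ψ (v * (π * (m ⬝ᵥ x)))) (fun v => ?_) (fun v x _ => ?_) fun x _ => ?_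
  · obtain ⟨c, hc⟩ : IsUnit (1 + π * v) :=
      ((Commute.all _ _).isNilpotent_mul_right hπ).isUnit_one_add
    rw [← hc]
    exact Finset.sum_nbij' (fun x => (c : R) • x) (fun x => ((c⁻¹ : Rˣ) : R) • x) (hS c) (hS c⁻¹)
      (fun x _ => by rw [smul_smul, Units.inv_mul, one_smul])
      (fun x _ => by rw [smul_smul, Units.mul_inv, one_smul]) fun x _ => rfl
  · rw [← AddChar.map_add_eq_mul, dotProduct_smul, smul_eq_mul]
    ring_nf
  · rw [AddChar.sum_mulShift _ hψ, Nat.cast_ite, Nat.cast_zero]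

end

variable [Fintype R] {ψ : AddChar R ℂ}

lemma shear_mem_unitSols {t : R} (ht : t ^ 2 = 0) {a x : Fin 3 → R} (u : Fin 3 → R)
    (hx : x ∈ unitSols a) : shear a t u x ∈ unitSols a := by
  obtain ⟨hunit, hQ⟩ := mem_unitSols.1 hx
  refine mem_unitSols.2 ⟨fun i => ?_, (diagBilin_shear ht a u x).trans hQ⟩
  have hnil : IsNilpotent (t * ((a * x) ⨯₃ u) i) :=
    (Commute.all _ _).isNilpotent_mul_right ⟨2, ht⟩
  exact hnil.isUnit_add_left_of_commute (hunit i) (Commute.all _ _)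

lemma sum_addChar_dotProduct [DecidableEq R] {ι : Type*} [Fintype ι] [DecidableEq ι]
    (hψ : ψ.IsPrimitive) (c : ι → R) :
    ∑ u : ι → R, ψ (u ⬝ᵥ c) = if c = 0 then (Fintype.card (ι → R) : ℂ) else 0 := by
  simp_rw [addChar_dotProduct, ← Fintype.prod_sum (fun i u => ψ (u * c i)),
    AddChar.sum_mulShift _ hψ]
  split_ifs with hc
  · simp only [hc, Pi.zero_apply, if_true, Finset.prod_const, Finset.card_univ, Fintype.card_fun,
      Nat.cast_pow]
  · obtain ⟨i, hi⟩ := Function.ne_iff.1 hc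
    exact Finset.prod_eq_zero (Finset.mem_univ i) (by rw [if_neg (by exact hi), Nat.cast_zero])

lemma unitExpSum_eq_sum_smul_cross_eq_zero [DecidableEq R] (hψ : ψ.IsPrimitive) {t : R}
    (ht : t ^ 2 = 0) (a m : Fin 3 → R) :
    unitExpSum ψ a m = ∑ x ∈ unitSols a with t • (m ⨯₃ (a * x)) = 0, ψ (m ⬝ᵥ x) := by
  refine sum_eq_sum_filter_of_average (T := shear a t)
    (χ := fun u x => ψ (u ⬝ᵥ (t • (m ⨯₃ (a * x))))) (fun u => ?_) (fun u x _ => ?_)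
    fun x _ => sum_addChar_dotProduct hψ _
  · refine Finset.sum_nbij' (shear a t u) (shear a t (-u)) (fun x => shear_mem_unitSols ht u)
      (fun x => shear_mem_unitSols ht (-u)) (fun x _ => shear_neg_shear ht a u x)
      (fun x _ => ?_) fun x _ => rfl
    simpa only [neg_neg] using shear_neg_shear ht a (-u) x
  · rw [← AddChar.map_add_eq_mul, dotProduct_shear]

lemma unitExpSum_eq_sum_critical [DecidableEq R] (hψ : ψ.IsPrimitive) {π t : R}
    (hπ : IsNilpotent π) (ht : t ^ 2 = 0) (a m : Fin 3 → R) :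
    unitExpSum ψ a m =
      ∑ x ∈ unitSols a with t • (m ⨯₃ (a * x)) = 0 ∧ π * (m ⬝ᵥ x) = 0, ψ (m ⬝ᵥ x) := by
  rw [unitExpSum_eq_sum_smul_cross_eq_zero hψ ht, ← Finset.filter_filter]
  refine sum_addChar_eq_sum_mul_dotProduct_eq_zero hψ hπ (fun c x hx => ?_) m
  obtain ⟨hx, hcross⟩ := Finset.mem_filter.1 hx
  refine Finset.mem_filter.2 ⟨smul_mem_unitSols c hx, ?_⟩
  rw [mul_smul_comm, map_smul, smul_comm, hcross, smul_zero]

end CriticalPoints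

section PrimePowerModulus

variable {p : ℕ} [Fact p.Prime] {n s j : ℕ}

lemma isUnit_intCast_of_not_dvd (n : ℕ) {u : ℤ} (hu : ¬ (p : ℤ) ∣ u) :
    IsUnit (u : ZMod (p ^ n)) := by
  rw [ZMod.coe_int_isUnit_iff_isCoprime, Nat.cast_pow]
  exact isCoprime_pow_of_not_dvd n hu

lemma natCast_pow_eq_zero_zmod_pow (p : ℕ) {n k : ℕ} (h : n ≤ k) : (p : ZMod (p ^ n)) ^ k = 0 := by
  rw [← Nat.cast_pow, ZMod.natCast_eq_zero_iff]
  exact pow_dvd_pow p h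

lemma pow_mul_intCast_eq_zero_iff {z : ℤ} :
    (p : ZMod (p ^ n)) ^ s * z = 0 ↔ (p : ℤ) ^ (n - s) ∣ z := by
  rcases le_total s n with hs | hs
  · have hcast : (p : ZMod (p ^ n)) ^ s * z = ((p : ℤ) ^ s * z : ℤ) := by push_cast; rfl
    rw [hcast, ZMod.intCast_zmod_eq_zero_iff_dvd, Nat.cast_pow, ← pow_mul_pow_sub _ hs,
      mul_dvd_mul_iff_left (pow_ne_zero s prime_intCast.ne_zero)]
  · rw [natCast_pow_eq_zero_zmod_pow p hs, zero_mul, Nat.sub_eq_zero_of_le hs, pow_zero]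
    exact iff_of_true rfl (one_dvd z)

lemma pow_dvd_of_pow_mul_eq_zero {c : ZMod (p ^ n)} (h : (p : ZMod (p ^ n)) ^ s * c = 0) :
    (p : ZMod (p ^ n)) ^ (n - s) ∣ c := by
  obtain ⟨z, rfl⟩ := ZMod.intCast_surjective c
  simpa only [map_pow, map_natCast, eq_intCast] using
    map_dvd (Int.castRingHom (ZMod (p ^ n))) (pow_mul_intCast_eq_zero_iff.1 h)

lemma eq_of_pow_mul_sub_eq_zero_of_val_div_eq {x y : ZMod (p ^ n)}
    (h : (p : ZMod (p ^ n)) ^ s * (x - y) = 0)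
    (hdiv : x.val / p ^ (n - s) = y.val / p ^ (n - s)) : x = y := by
  have hdvd : ((p ^ (n - s) : ℕ) : ℤ) ∣ (x.val : ℤ) - y.val := by
    rw [Nat.cast_pow, ← pow_mul_intCast_eq_zero_iff (n := n)]
    simpa only [Int.cast_sub, Int.cast_natCast, ZMod.natCast_zmod_val] using h
  have hmod : x.val % p ^ (n - s) = y.val % p ^ (n - s) :=
    ((Nat.modEq_iff_dvd).2 hdvd).symm
  exact ZMod.val_injective _ (by
    rw [← Nat.div_add_mod x.val (p ^ (n - s)), ← Nat.div_add_mod y.val (p ^ (n - s)), hdiv, hmod])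

lemma eq_of_sq_eq_of_val_mod_eq (hp2 : p ≠ 2) {x y : ZMod (p ^ n)} (hy : IsUnit y)
    (hsq : x ^ 2 = y ^ 2) (hmod : x.val % p = y.val % p) : x = y := by
  obtain ⟨c, hc⟩ : (p : ZMod (p ^ n)) ∣ x - y := by
    have hdvd : (p : ℤ) ∣ (x.val : ℤ) - y.val :=
      Nat.modEq_iff_dvd.1 (show y.val ≡ x.val [MOD p] from hmod.symm)
    simpa only [map_sub, map_natCast, ZMod.natCast_zmod_val] using
      map_dvd (Int.castRingHom (ZMod (p ^ n))) hdvd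
  have hunit : IsUnit (x + y) := by
    have htwo : IsUnit (2 : ZMod (p ^ n)) := by
      exact_mod_cast isUnit_intCast_of_not_dvd n (not_dvd_two hp2)
    have hnil : IsNilpotent (p * c) := (Commute.all _ _).isNilpotent_mul_right
      ⟨n, natCast_pow_eq_zero_zmod_pow p le_rfl⟩
    rw [show x + y = 2 * y + p * c by linear_combination hc]
    exact hnil.isUnit_add_left_of_commute (htwo.mul hy) (Commute.all _ _)
  refine sub_eq_zero.1 (hunit.mul_right_eq_zero.1 ?_)
  linear_combination hsq

/-- A critical point is determined by one coordinate, a second one up to `p ^ (s + j)` choices, and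
the class modulo `p` of the third, which the quadratic equation then pins down. -/
lemma card_critical_le (hp2 : p ≠ 2) {a m : Fin 3 → ZMod (p ^ n)} (ha : ∀ i, IsUnit (a i))
    {i : Fin 3} (hm : IsUnit (m i)) {F : Finset (Fin 3 → ZMod (p ^ n))} (hF : F ⊆ unitSols a)
    (hcross : ∀ x ∈ F,
      (p : ZMod (p ^ n)) ^ s • (((p : ZMod (p ^ n)) ^ j • m) ⨯₃ (a * x)) = 0) :
    F.card ≤ p ^ n * (p ^ (s + j) * p) := by
  have hp := (Fact.out : p.Prime).pos
  obtain ⟨k, l, hik, hkl, hil⟩ : ∃ k l : Fin 3, i ≠ k ∧ k ≠ l ∧ i ≠ l := by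
    clear hm hcross
    decide +revert
  have hcard : p ^ n * (p ^ (s + j) * p) = ((Finset.univ : Finset (ZMod (p ^ n))) ×ˢ
      (Finset.range (p ^ (s + j)) ×ˢ Finset.range p)).card := by
    rw [Finset.card_product, Finset.card_product, Finset.card_univ, ZMod.card, Finset.card_range,
      Finset.card_range]
  rw [hcard]
  refine Finset.card_le_card_of_injOn
    (fun x => (x i, ((x k).val / p ^ (n - (s + j)), (x l).val % p))) (fun x _ => ?_) ?_
  · refine Finset.mem_product.2 ⟨Finset.mem_univ _, Finset.mem_product.2 ⟨Finset.mem_range.2 ?_,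
      Finset.mem_range.2 (Nat.mod_lt _ hp)⟩⟩
    rw [Nat.div_lt_iff_lt_mul (pow_pos hp _), ← pow_add]
    exact (ZMod.val_lt _).trans_le (Nat.pow_le_pow_right hp le_add_tsub)
  · intro x hx y hy hxy
    simp only [Prod.mk.injEq] at hxy
    obtain ⟨hi, hdiv, hmod⟩ := hxy
    have hk : x k = y k := by
      refine eq_of_pow_mul_sub_eq_zero_of_val_div_eq ?_ hdiv
      rw [pow_add]
      exact mul_mul_sub_eq_zero_of_smul_cross_eq_zero hm (ha k) (hcross x hx) (hcross y hy) hi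
    obtain ⟨-, hQx⟩ := mem_unitSols.1 (hF hx)
    obtain ⟨hunit, hQy⟩ := mem_unitSols.1 (hF hy)
    rw [diagBilin_eq_of_ne hik hkl hil] at hQx hQy
    have hl : x l = y l := by
      refine eq_of_sq_eq_of_val_mod_eq hp2 (hunit l) ((ha l).mul_left_cancel ?_) hmod
      rw [hi, hk] at hQx
      linear_combination hQx - hQy
    ext u
    obtain rfl | rfl | rfl : u = i ∨ u = k ∨ u = l := by lia
    exacts [hi, hk, hl]

end PrimePowerModulus

section FreqSum

/-- The exponential sum at the integer frequency `m` over the unit zeros modulo `q` of an integral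
diagonal ternary form. -/
noncomputable def freqSum (q : ℕ) [NeZero q] (a m : Fin 3 → ℤ) : ℂ :=
  unitExpSum (ZMod.stdAddChar (N := q)) (fun i => (a i : ZMod q)) (fun i => (m i : ZMod q))

variable {p : ℕ} [Fact p.Prime] {n : ℕ} {a m : Fin 3 → ℤ}

lemma freqSum_eq_sum_critical (p n : ℕ) [Fact p.Prime] (a m : Fin 3 → ℤ) :
    freqSum (p ^ n) a m = ∑ x ∈ unitSols (fun i => (a i : ZMod (p ^ n))) with
      (p : ZMod (p ^ n)) ^ (n - n / 2) • ((fun i => (m i : ZMod (p ^ n))) ⨯₃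
        ((fun i => (a i : ZMod (p ^ n))) * x)) = 0 ∧
      (p : ZMod (p ^ n)) * ((fun i => (m i : ZMod (p ^ n))) ⬝ᵥ x) = 0,
        ZMod.stdAddChar ((fun i => (m i : ZMod (p ^ n))) ⬝ᵥ x) :=
  unitExpSum_eq_sum_critical (ZMod.isPrimitive_stdAddChar _)
    ⟨n, natCast_pow_eq_zero_zmod_pow p le_rfl⟩
    (by rw [← pow_mul]; exact natCast_pow_eq_zero_zmod_pow p (by lia)) _ _

lemma pow_dvd_diagBilin_adjCoeff_of_freqSum_ne_zero (ha : ∀ i, ¬ (p : ℤ) ∣ a i)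
    (hne : freqSum (p ^ n) a m ≠ 0) : (p : ℤ) ^ (n - 1) ∣ diagBilin (adjCoeff a) m m := by
  rw [freqSum_eq_sum_critical] at hne
  obtain ⟨x, hx, -⟩ := Finset.exists_ne_zero_of_sum_ne_zero hne
  obtain ⟨hx, hcross, hdot⟩ := Finset.mem_filter.1 hx
  obtain ⟨hunit, hQ⟩ := mem_unitSols.1 hx
  have hadj := mul_diagBilin_adjCoeff_eq_zero (d := (p : ZMod (p ^ n)) ^ (n / 2))
    (fun c hc => by
      simpa only [Nat.sub_sub_self (Nat.div_le_self n 2)] using pow_dvd_of_pow_mul_eq_zero hc)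
    (by rw [← pow_mul, ← pow_succ']; exact natCast_pow_eq_zero_zmod_pow p (by lia))
    (isUnit_intCast_of_not_dvd n (ha 0)) (hunit 0) hQ hcross hdot
  rw [← pow_mul_intCast_eq_zero_iff (n := n), pow_one, ← hadj]
  simp only [diagBilin_apply, Fin.sum_univ_three, adjCoeff, cons_val_zero, cons_val_one, cons_val,
    Int.cast_add, Int.cast_mul]

lemma norm_freqSum_pow_smul_le (hp2 : p ≠ 2) (ha : ∀ i, ¬ (p : ℤ) ∣ a i)
    (hm : ∃ i, ¬ (p : ℤ) ∣ m i) (j : ℕ) :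
    ‖freqSum (p ^ n) a ((p : ℤ) ^ j • m)‖ ≤
      (p : ℝ) ^ n * (p : ℝ) ^ (n - n / 2) * (p : ℝ) ^ j * p := by
  obtain ⟨i, hi⟩ := hm
  have hcast : (fun i => ((((p : ℤ) ^ j • m) i : ℤ) : ZMod (p ^ n))) =
      (p : ZMod (p ^ n)) ^ j • fun i => (m i : ZMod (p ^ n)) := by
    ext i
    simp only [Pi.smul_apply, smul_eq_mul, Int.cast_mul, Int.cast_pow, Int.cast_natCast]
  rw [freqSum_eq_sum_critical, hcast]
  refine (norm_sum_addChar_le_card _ _ _).trans ?_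
  refine le_trans (Nat.cast_le.2 (card_critical_le hp2 (s := n - n / 2) (j := j)
    (m := fun i => (m i : ZMod (p ^ n))) (fun i => isUnit_intCast_of_not_dvd n (ha i))
    (isUnit_intCast_of_not_dvd n hi) (Finset.filter_subset _ _)
    fun x hx => (Finset.mem_filter.1 hx).2.1)) (le_of_eq ?_)
  push_cast
  ring

end FreqSum

section ConicCount

variable {F : Type*} [Field F] [Fintype F] [DecidableEq F]

lemma card_filter_ne_zero_sq_eq (hF : ringChar F ≠ 2) (v : F) :
    (({y | y ≠ 0 ∧ y ^ 2 = v} : Finset F).card : ℤ) = (1 : MulChar F ℤ) v + quadraticChar F v := by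
  obtain rfl | hv := eq_or_ne v 0
  · simp only [pow_eq_zero_iff two_ne_zero, ne_eq, not_and_self, Finset.filter_false,
      Finset.card_empty, Nat.cast_zero, MulChar.map_zero, add_zero]
  · rw [MulChar.one_apply hv.isUnit, add_comm, ← quadraticChar_card_sqrts hF v]
    congr 2
    ext y
    rw [Finset.mem_filter_univ, Set.mem_toFinset, Set.mem_ofPred_eq, and_iff_right_iff_imp]
    rintro rfl
    exact ne_zero_pow two_ne_zero hv

lemma quadraticChar_div (u v : F) : quadraticChar F (u / v) = quadraticChar F (u * v) := by
  obtain rfl | hv := eq_or_ne v 0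
  · rw [div_zero, mul_zero]
  · rw [div_eq_mul_inv, map_mul, map_mul, ← mul_one (quadraticChar F v⁻¹),
      ← quadraticChar_sq_one hv, sq, ← mul_assoc (quadraticChar F v⁻¹), ← map_mul,
      inv_mul_cancel₀ hv, map_one, one_mul]

open Classical in
/-- The points of the affine conic `b y² + c z² = d` with nonzero coordinates. -/
noncomputable def conicUnits (b c d : F) : Finset (F × F) :=
  {y | (y.1 ≠ 0 ∧ y.2 ≠ 0) ∧ b * y.1 ^ 2 + c * y.2 ^ 2 = d}

lemma mem_conicUnits {b c d : F} {y : F × F} :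
    y ∈ conicUnits b c d ↔ (y.1 ≠ 0 ∧ y.2 ≠ 0) ∧ b * y.1 ^ 2 + c * y.2 ^ 2 = d := by
  classical exact Finset.mem_filter_univ _

lemma card_conicUnits_eq_sum {b c d : F} (hb : b ≠ 0) (hc : c ≠ 0) (hd : d ≠ 0) :
    (conicUnits b c d).card = ∑ t : F, ({y | y ≠ 0 ∧ y ^ 2 = d / b * t} : Finset F).card *
      ({z | z ≠ 0 ∧ z ^ 2 = d / c * (1 - t)} : Finset F).card := by
  rw [Finset.card_eq_sum_card_fiberwise (f := fun y => b * y.1 ^ 2 / d)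
    fun _ _ => Finset.mem_coe.2 (Finset.mem_univ _)]
  refine Finset.sum_congr rfl fun t _ => ?_
  rw [← Finset.card_product]
  congr 1
  ext ⟨y, z⟩
  have hy : b * y ^ 2 / d = t ↔ y ^ 2 = d / b * t := by
    rw [div_eq_iff hd, div_mul_eq_mul_div, eq_div_iff hb, mul_comm b, mul_comm d]
  rw [Finset.mem_filter, mem_conicUnits, Finset.mem_product, Finset.mem_filter_univ,
    Finset.mem_filter_univ, and_assoc, and_assoc, and_assoc, hy]
  refine and_congr_right fun _ =>
    ⟨fun ⟨hz, hQ, ht⟩ => ⟨ht, hz, ?_⟩, fun ⟨ht, hz, hz2⟩ => ⟨hz, ?_, ht⟩⟩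
  · dsimp only at ht hQ ⊢
    rw [ht] at hQ
    field_simp at hQ ⊢
    linear_combination hQ
  · dsimp only at ht hz2 ⊢
    rw [ht, hz2]
    field_simp
    ring

/-- Each of the four terms of the product of the root counts is a Jacobi sum. -/
lemma card_conicUnits (hF : ringChar F ≠ 2) {b c d : F} (hb : b ≠ 0) (hc : c ≠ 0) (hd : d ≠ 0) :
    ((conicUnits b c d).card : ℤ) = Fintype.card F - (2 + quadraticChar F (d * b) +
      quadraticChar F (d * c) + quadraticChar F (-(b * c))) := by
  have hχ := quadraticChar_ne_one hF
  have hone : ∀ {e : F}, e ≠ 0 → ∀ t, (1 : MulChar F ℤ) (e * t) = (1 : MulChar F ℤ) t :=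
    fun he t => by rw [map_mul, MulChar.one_apply he.isUnit, one_mul]
  have hJ := jacobiSum_nontrivial_inv hχ
  rw [(quadraticChar_isQuadratic F).inv] at hJ
  calc ((conicUnits b c d).card : ℤ)
      = ∑ t, ((1 : MulChar F ℤ) t + quadraticChar F (d * b) * quadraticChar F t) *
          ((1 : MulChar F ℤ) (1 - t) + quadraticChar F (d * c) * quadraticChar F (1 - t)) := by
        rw [card_conicUnits_eq_sum hb hc hd, Nat.cast_sum]
        refine Finset.sum_congr rfl fun t _ => ?_
        rw [Nat.cast_mul, card_filter_ne_zero_sq_eq hF, card_filter_ne_zero_sq_eq hF,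
          hone (div_ne_zero hd hb), hone (div_ne_zero hd hc), map_mul (quadraticChar F),
          map_mul (quadraticChar F) (d / c), quadraticChar_div, quadraticChar_div]
    _ = jacobiSum 1 1 + quadraticChar F (d * c) * jacobiSum 1 (quadraticChar F) +
          quadraticChar F (d * b) * jacobiSum (quadraticChar F) 1 +
          quadraticChar F (d * b) * quadraticChar F (d * c) *
            jacobiSum (quadraticChar F) (quadraticChar F) := by
        simp only [jacobiSum, Finset.mul_sum]
        rw [← Finset.sum_add_distrib, ← Finset.sum_add_distrib, ← Finset.sum_add_distrib]
        exact Finset.sum_congr rfl fun t _ => by ring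
    _ = _ := by
        have hbc : quadraticChar F (d * b) * quadraticChar F (d * c) * quadraticChar F (-1) =
            quadraticChar F (-(b * c)) := by
          rw [← map_mul, ← map_mul, ← one_mul (quadraticChar F (-(b * c))),
            ← quadraticChar_sq_one' hd, ← map_mul]
          congr 1
          ring
        rw [jacobiSum_one_one, jacobiSum_one_nontrivial hχ, jacobiSum_comm,
          jacobiSum_one_nontrivial hχ, hJ]
        linear_combination -hbc

lemma cons_mem_unitSols_iff {a : Fin 3 → F} {y : F × F} :
    ![1, y.1, y.2] ∈ unitSols a ↔ y ∈ conicUnits (a 1) (a 2) (-a 0) := by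
  rw [mem_unitSols, mem_conicUnits, Fin.forall_fin_succ, Fin.forall_fin_two, diagBilin_apply,
    Fin.sum_univ_three]
  simp only [isUnit_iff_ne_zero, cons_val_zero, cons_val_succ, cons_val_one, cons_val, ne_eq,
    one_ne_zero, not_false_eq_true, true_and]
  refine and_congr_right fun _ => ?_
  constructor <;> intro h <;> linear_combination h

lemma card_unitSols_eq_mul_card_conicUnits (a : Fin 3 → F) :
    (unitSols a).card = (Fintype.card F - 1) * (conicUnits (a 1) (a 2) (-a 0)).card := by
  have hsmul : ∀ (t y z : F), t • ![1, y, z] = ![t, t * y, t * z] := fun t y z => by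
    rw [smul_cons, smul_cons, smul_cons, smul_empty, smul_eq_mul, smul_eq_mul, smul_eq_mul, mul_one]
  rw [← Fintype.card_units, ← Finset.card_univ, ← Finset.card_product]
  symm
  refine Finset.card_bij (fun t _ => (t.1 : F) • ![1, t.2.1, t.2.2]) ?_ ?_ ?_
  · rintro ⟨t, y⟩ hy
    exact smul_mem_unitSols t (cons_mem_unitSols_iff.2 (Finset.mem_product.1 hy).2)
  · rintro ⟨t, y⟩ - ⟨t', y'⟩ - h
    simp only [hsmul, vecCons_inj, Units.val_inj] at h
    obtain ⟨rfl, h1, h2, -⟩ := h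
    exact Prod.ext rfl (Prod.ext (t.mul_right_inj.1 h1) (t.mul_right_inj.1 h2))
  · intro x hx
    obtain ⟨t, ht⟩ := (mem_unitSols.1 hx).1 0
    have hx0 : (t : F) • ![1, x 1 / t, x 2 / t] = x := by
      rw [hsmul, mul_div_cancel₀ _ t.ne_zero, mul_div_cancel₀ _ t.ne_zero, ht]
      exact FinVec.etaExpand_eq x
    refine ⟨(t, (x 1 / t, x 2 / t)), Finset.mem_product.2 ⟨Finset.mem_univ _, ?_⟩, hx0⟩
    have hnorm := smul_mem_unitSols t⁻¹ hx
    rw [← hx0, smul_smul, Units.inv_mul, one_smul] at hnorm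
    exact cons_mem_unitSols_iff.1 hnorm

lemma card_unitSols (hF : ringChar F ≠ 2) {a : Fin 3 → F} (ha : ∀ i, a i ≠ 0) :
    ((unitSols a).card : ℤ) = (Fintype.card F - 1) * (Fintype.card F -
      (2 + quadraticChar F (-(a 0 * a 1)) + quadraticChar F (-(a 0 * a 2)) +
        quadraticChar F (-(a 1 * a 2)))) := by
  rw [card_unitSols_eq_mul_card_conicUnits, Nat.cast_mul, Nat.cast_pred Fintype.card_pos,
    card_conicUnits hF (ha 1) (ha 2) (neg_ne_zero.2 (ha 0)), neg_mul, neg_mul]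

end ConicCount

section Lift

variable {p n : ℕ}

/-- Reduction modulo `p`. -/
def redHom (p : ℕ) (hn : n ≠ 0) : ZMod (p ^ n) →+* ZMod p :=
  ZMod.castHom (dvd_pow_self p hn) (ZMod p)

lemma redHom_surjective (hn : n ≠ 0) : Function.Surjective (redHom p hn) :=
  ZMod.castHom_surjective (dvd_pow_self p hn)

variable [Fact p.Prime]

lemma redHom_eq_natCast_val (hn : n ≠ 0) (x : ZMod (p ^ n)) : redHom p hn x = (x.val : ZMod p) := by
  rw [← map_natCast (redHom p hn), ZMod.natCast_zmod_val]

lemma isUnit_redHom_iff (hn : n ≠ 0) {x : ZMod (p ^ n)} : IsUnit (redHom p hn x) ↔ IsUnit x := by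
  conv_rhs => rw [← ZMod.natCast_zmod_val x]
  rw [redHom_eq_natCast_val, ZMod.isUnit_iff_coprime, ZMod.isUnit_iff_coprime,
    Nat.coprime_pow_right_iff (Nat.pos_of_ne_zero hn)]

lemma eq_of_sq_eq_of_redHom_eq (hp2 : p ≠ 2) (hn : n ≠ 0) {x y : ZMod (p ^ n)} (hy : IsUnit y)
    (hsq : x ^ 2 = y ^ 2) (h : redHom p hn x = redHom p hn y) : x = y := by
  rw [redHom_eq_natCast_val, redHom_eq_natCast_val, ZMod.natCast_eq_natCast_iff] at h
  exact eq_of_sq_eq_of_val_mod_eq hp2 hy hsq h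

lemma card_filter_redHom_eq (hn : n ≠ 0) (ξ : ZMod p) :
    ({x | redHom p hn x = ξ} : Finset (ZMod (p ^ n))).card = p ^ (n - 1) := by
  have hsum := Finset.card_eq_sum_card_fiberwise (s := (Finset.univ : Finset (ZMod (p ^ n))))
    (t := Finset.univ) (f := redHom p hn) fun _ _ => Finset.mem_coe.2 (Finset.mem_univ _)
  rw [Finset.sum_congr rfl fun η _ => AddMonoidHom.card_fiber_eq_of_mem_range (redHom p hn)
      (redHom_surjective hn η) (redHom_surjective hn ξ), Finset.sum_const, Finset.card_univ,
    Finset.card_univ, ZMod.card, ZMod.card, smul_eq_mul] at hsum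
  exact Nat.eq_of_mul_eq_mul_left (Nat.Prime.pos Fact.out)
    (hsum.symm.trans (mul_pow_sub_one hn p).symm)

/-- Hensel's lemma for squares: the squaring map is injective on the residue class of a unit, and
its target is a residue class of the same cardinality. -/
lemma exists_sq_eq_of_redHom_eq (hp2 : p ≠ 2) (hn : n ≠ 0) {w : ZMod (p ^ n)} {ξ : ZMod p}
    (hξ : IsUnit ξ) (hw : redHom p hn w = ξ ^ 2) : ∃ z, z ^ 2 = w ∧ redHom p hn z = ξ := by
  let S (η : ZMod p) : Finset (ZMod (p ^ n)) := {x | redHom p hn x = η}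
  have hS : ∀ {η x}, x ∈ S η ↔ redHom p hn x = η := Finset.mem_filter_univ _
  have hmaps : ∀ x ∈ S ξ, x ^ 2 ∈ S (ξ ^ 2) := fun x hx => hS.2 (by rw [map_pow, hS.1 hx])
  have hinj : Set.InjOn (· ^ 2) (S ξ : Set (ZMod (p ^ n))) := fun x hx y hy h =>
    eq_of_sq_eq_of_redHom_eq hp2 hn ((isUnit_redHom_iff hn).1 (hS.1 hy ▸ hξ)) h
      ((hS.1 hx).trans (hS.1 hy).symm)
  obtain ⟨z, hz, hzw⟩ := Finset.surjOn_of_injOn_of_card_le _ hmaps hinj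
    (by rw [card_filter_redHom_eq, card_filter_redHom_eq]) (Finset.mem_coe.2 (hS.2 hw))
  exact ⟨z, hzw, hS.1 hz⟩

lemma exists_cons_mem_unitSols (hp2 : p ≠ 2) (hn : n ≠ 0) {a : Fin 3 → ZMod (p ^ n)}
    (ha : IsUnit (a 2)) {ξ : Fin 3 → ZMod p} (hξ : ξ ∈ unitSols (redHom p hn ∘ a))
    {x y : ZMod (p ^ n)} (hx : redHom p hn x = ξ 0) (hy : redHom p hn y = ξ 1) :
    ∃ z, ![x, y, z] ∈ unitSols a ∧ redHom p hn ∘ ![x, y, z] = ξ := by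
  obtain ⟨hunit, hQ⟩ := mem_unitSols.1 hξ
  simp only [diagBilin_apply, Fin.sum_univ_three, Function.comp_apply] at hQ
  obtain ⟨c, hc⟩ := ha.exists_left_inv
  have hc' := congrArg (redHom p hn) hc
  rw [map_mul, map_one] at hc'
  obtain ⟨z, hz, hzξ⟩ := exists_sq_eq_of_redHom_eq hp2 hn (hunit 2)
    (w := -c * (a 0 * x ^ 2 + a 1 * y ^ 2)) (by
      simp only [map_mul, map_neg, map_add, map_pow, hx, hy]
      linear_combination (-redHom p hn c) * hQ + ξ 2 ^ 2 * hc')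
  have hred : redHom p hn ∘ ![x, y, z] = ξ := by
    ext i
    fin_cases i
    exacts [hx, hy, hzξ]
  refine ⟨z, mem_unitSols.2 ⟨fun i => ?_, ?_⟩, hred⟩
  · rw [← isUnit_redHom_iff hn, ← Function.comp_apply (f := redHom p hn), hred]
    exact hunit i
  · rw [diagBilin_apply, Fin.sum_univ_three]
    simp only [cons_val_zero, cons_val_one, cons_val]
    linear_combination a 2 * hz - (a 0 * x ^ 2 + a 1 * y ^ 2) * hc

lemma eq_of_mem_unitSols_of_redHom_eq (hp2 : p ≠ 2) (hn : n ≠ 0) {a x y : Fin 3 → ZMod (p ^ n)}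
    (ha : IsUnit (a 2)) (hx : x ∈ unitSols a) (hy : y ∈ unitSols a) (h0 : x 0 = y 0)
    (h1 : x 1 = y 1) (h2 : redHom p hn (x 2) = redHom p hn (y 2)) : x = y := by
  obtain ⟨-, hQx⟩ := mem_unitSols.1 hx
  obtain ⟨hunit, hQy⟩ := mem_unitSols.1 hy
  rw [diagBilin_apply, Fin.sum_univ_three] at hQx hQy
  have hsq : x 2 ^ 2 = y 2 ^ 2 := ha.mul_left_cancel (by
    rw [h0, h1] at hQx
    linear_combination hQx - hQy)
  ext i
  fin_cases i
  exacts [h0, h1, eq_of_sq_eq_of_redHom_eq hp2 hn (hunit 2) hsq h2]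

lemma card_filter_unitSols_redHom_eq (hp2 : p ≠ 2) (hn : n ≠ 0) {a : Fin 3 → ZMod (p ^ n)}
    (ha : IsUnit (a 2)) {ξ : Fin 3 → ZMod p} (hξ : ξ ∈ unitSols (redHom p hn ∘ a)) :
    {x ∈ unitSols a | redHom p hn ∘ x = ξ}.card = (p ^ (n - 1)) ^ 2 := by
  rw [sq]
  nth_rw 1 [← card_filter_redHom_eq hn (ξ 0)]
  rw [← card_filter_redHom_eq hn (ξ 1), ← Finset.card_product]
  refine Finset.card_bij (fun x _ => (x 0, x 1)) ?_ ?_ ?_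
  · intro x hx
    have hred := (Finset.mem_filter.1 hx).2
    rw [Finset.mem_product, Finset.mem_filter_univ, Finset.mem_filter_univ]
    exact ⟨congrFun hred 0, congrFun hred 1⟩
  · intro x hx y hy hxy
    obtain ⟨hx, hxξ⟩ := Finset.mem_filter.1 hx
    obtain ⟨hy, hyξ⟩ := Finset.mem_filter.1 hy
    obtain ⟨h0, h1⟩ := Prod.mk_inj.1 hxy
    exact eq_of_mem_unitSols_of_redHom_eq hp2 hn ha hx hy h0 h1 (congrFun (hxξ.trans hyξ.symm) 2)
  · rintro ⟨x, y⟩ hxy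
    rw [Finset.mem_product, Finset.mem_filter_univ, Finset.mem_filter_univ] at hxy
    obtain ⟨z, hz, hred⟩ := exists_cons_mem_unitSols hp2 hn ha hξ hxy.1 hxy.2
    exact ⟨![x, y, z], Finset.mem_filter.2 ⟨hz, hred⟩, rfl⟩

lemma card_unitSols_pow (hp2 : p ≠ 2) (hn : n ≠ 0) {a : Fin 3 → ZMod (p ^ n)}
    (ha : IsUnit (a 2)) :
    (unitSols a).card = (unitSols (redHom p hn ∘ a)).card * (p ^ (n - 1)) ^ 2 := by
  rw [Finset.card_eq_sum_card_fiberwise (f := fun x => redHom p hn ∘ x)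
      (t := unitSols (redHom p hn ∘ a)),
    Finset.sum_congr rfl fun ξ hξ => card_filter_unitSols_redHom_eq hp2 hn ha hξ,
    Finset.sum_const, smul_eq_mul]
  intro x hx
  obtain ⟨hunit, hQ⟩ := mem_unitSols.1 (Finset.mem_coe.1 hx)
  refine Finset.mem_coe.2 (mem_unitSols.2 ⟨fun i => (hunit i).map _, ?_⟩)
  have hred := map_diagBilin (redHom p hn) a x x
  rw [hQ, map_zero] at hred
  exact hred.symm

lemma card_unitSols_intCast (hp2 : p ≠ 2) (hn : n ≠ 0) {a : Fin 3 → ℤ}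
    (ha : ∀ i, ¬ (p : ℤ) ∣ a i) :
    ((unitSols fun i => (a i : ZMod (p ^ n))).card : ℤ) = ((p : ℤ) - 1) * (p -
      (2 + legendreSym p (-(a 0 * a 1)) + legendreSym p (-(a 0 * a 2)) +
        legendreSym p (-(a 1 * a 2)))) * (p ^ (n - 1)) ^ 2 := by
  have hF : ringChar (ZMod p) ≠ 2 := by rwa [ZMod.ringChar_zmod_n]
  have hred : redHom p hn ∘ (fun i => (a i : ZMod (p ^ n))) = fun i => (a i : ZMod p) :=
    funext fun i => map_intCast _ _
  rw [card_unitSols_pow hp2 hn (isUnit_intCast_of_not_dvd n (ha 2)), hred, Nat.cast_mul,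
    card_unitSols hF fun i => mt (ZMod.intCast_zmod_eq_zero_iff_dvd _ _).1 (ha i), ZMod.card]
  simp only [legendreSym, Int.cast_neg, Int.cast_mul, Nat.cast_pow]

end Lift

section ProductSums

variable {α 𝕜 : Type*} [NormedCommRing 𝕜] {k : ℕ}

lemma summable_norm_prod_apply {f : Fin k → α → 𝕜} (hf : ∀ i, Summable fun x => ‖f i x‖) :
    Summable fun x : Fin k → α => ‖∏ i, f i (x i)‖ := by
  induction k with
  | zero => exact (hasSum_fintype _).summable
  | succ k ih =>
    rw [← (Fin.consEquiv fun _ => α).summable_iff]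
    refine ((hf 0).mul_norm (ih fun i => hf i.succ)).congr fun x => ?_
    rw [Function.comp_apply, Fin.prod_univ_succ]
    rfl

variable [CompleteSpace 𝕜]

lemma tsum_prod_apply {f : Fin k → α → 𝕜} (hf : ∀ i, Summable fun x => ‖f i x‖) :
    ∑' x : Fin k → α, ∏ i, f i (x i) = ∏ i, ∑' x, f i x := by
  induction k with
  | zero =>
    simp only [Finset.univ_eq_empty, Finset.prod_empty, tsum_fintype, Finset.univ_unique,
      Finset.sum_const, Finset.card_singleton, one_smul]
  | succ k ih =>
    rw [Fin.prod_univ_succ, ← ih fun i => hf i.succ, tsum_mul_tsum_of_summable_norm (hf 0)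
      (summable_norm_prod_apply fun i => hf i.succ), ← (Fin.consEquiv fun _ => α).tsum_eq]
    refine tsum_congr fun x => ?_
    rw [Fin.prod_univ_succ]
    rfl

lemma tsum_sum_prod_apply {β : Type*} (U : Finset (Fin k → β)) {F : β → α → 𝕜}
    (hF : ∀ r, Summable fun x => ‖F r x‖) :
    ∑' x : Fin k → α, ∑ u ∈ U, ∏ i, F (u i) (x i) = ∑ u ∈ U, ∏ i, ∑' x, F (u i) x := by
  have hsum (u : Fin k → β) : Summable fun x : Fin k → α => ∏ i, F (u i) (x i) :=
    (summable_norm_prod_apply fun i => hF (u i)).of_norm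
  rw [Summable.tsum_finsetSum fun u _ => hsum u]
  exact Finset.sum_congr rfl fun u _ => tsum_prod_apply fun i => hF (u i)

end ProductSums

section Poisson

/-- The value of the tensor power of `f` at the lattice point `δ • m`. -/
noncomputable def tensorVal {ι : Type*} [Fintype ι] (f : 𝓢(ℝ, ℂ)) (δ : ℝ) (m : ι → ℤ) : ℂ :=
  ∏ i, f (m i * δ)

lemma summable_norm_schwartz_int_mul (f : 𝓢(ℝ, ℂ)) {δ : ℝ} (hδ : δ ≠ 0) :
    Summable fun m : ℤ => ‖f (m * δ)‖ := by
  have htend : Tendsto (fun m : ℤ => (m : ℝ) * δ) cofinite (cocompact ℝ) :=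
    (Homeomorph.mulRight₀ δ hδ).isClosedEmbedding.tendsto_cocompact.comp Int.tendsto_coe_cofinite
  refine summable_of_isBigO ?_ ((f.isBigO_cocompact_zpow (-2)).comp_tendsto htend).norm_left
  refine ((Real.summable_one_div_int_pow.2 one_lt_two).mul_right (δ ^ 2)⁻¹).congr fun m => ?_
  rw [Function.comp_apply, _root_.zpow_neg, Real.norm_eq_abs, zpow_ofNat, sq_abs, mul_pow, mul_inv,
    one_div]

lemma fourier_comp_mul_left (f : ℝ → ℂ) {c : ℝ} (hc : 0 < c) (w : ℝ) :
    𝓕 (fun t => f (c * t)) w = (c⁻¹ : ℝ) * 𝓕 f (w / c) := by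
  have h := Measure.integral_comp_mul_left
    (fun v : ℝ => Real.fourierChar (-(v * (w / c))) • f v) c
  rw [abs_of_pos (inv_pos.2 hc), Complex.real_smul] at h
  rw [Real.fourier_real_eq, Real.fourier_real_eq, ← h]
  refine integral_congr_ae (ae_of_all _ fun v => ?_)
  have : v * w = c * v * (w / c) := by field_simp
  simp only [this]

lemma tsum_comp_mul_add_eq (f : 𝓢(ℝ, ℂ)) {c : ℝ} (hc : 0 < c) (s : ℝ) :
    ∑' k : ℤ, f (c * (s + k)) =
      (c⁻¹ : ℝ) * ∑' m : ℤ, 𝓕 f (m * c⁻¹) * fourier m (s : UnitAddCircle) := by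
  let g : 𝓢(ℝ, ℂ) := SchwartzMap.compCLMOfContinuousLinearEquiv ℂ
    (ContinuousLinearEquiv.smulLeft (Units.mk0 c hc.ne')) f
  have hg : ∀ m : ℝ, 𝓕 g m = (c⁻¹ : ℝ) * 𝓕 f (m * c⁻¹) := fun m => by
    rw [← div_eq_mul_inv]
    exact fourier_comp_mul_left f hc m
  rw [← tsum_mul_left]
  refine (SchwartzMap.tsum_eq_tsum_fourier g s).trans (tsum_congr fun m => ?_)
  rw [hg, mul_assoc]

lemma ite_mem_eq_sum_prod {q k : ℕ} (U : Finset (Fin k → ZMod q))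
    (g : ℤ → ℂ) (x : Fin k → ℤ) :
    (if (fun i => (x i : ZMod q)) ∈ U then ∏ i, g (x i) else 0) =
      ∑ u ∈ U, ∏ i, if (x i : ZMod q) = u i then g (x i) else 0 := by
  have hprod (u : Fin k → ZMod q) : (∏ i, if (x i : ZMod q) = u i then g (x i) else 0) =
      if (fun i => (x i : ZMod q)) = u then ∏ i, g (x i) else 0 := by
    rw [Finset.prod_ite_zero]
    simp only [Finset.mem_univ, true_imp_iff, funext_iff]
  simp_rw [hprod, Finset.sum_ite_eq]

variable {q k : ℕ} [NeZero q]

lemma tsum_ite_intCast_eq (r : ZMod q) (g : ℤ → ℂ) :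
    ∑' x : ℤ, (if (x : ZMod q) = r then g x else 0) = ∑' k : ℤ, g (r.val + q * k) := by
  have hq : (q : ℤ) ≠ 0 := by exact_mod_cast NeZero.ne q
  have hinj : Function.Injective fun k : ℤ => (r.val : ℤ) + q * k := fun k l h =>
    mul_left_cancel₀ hq (add_left_cancel h)
  rw [← hinj.tsum_eq]
  · refine tsum_congr fun k => if_pos ?_
    push_cast
    rw [ZMod.natCast_zmod_val, CharP.cast_eq_zero, zero_mul, add_zero]
  · intro x hx
    have hxr : (x : ZMod q) = r := by
      by_contra h
      exact hx (if_neg h)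
    have hdvd : (q : ℤ) ∣ x - r.val := by
      rw [← ZMod.intCast_zmod_eq_zero_iff_dvd, Int.cast_sub, hxr, Int.cast_natCast,
        ZMod.natCast_zmod_val, sub_self]
    obtain ⟨k, hk⟩ := hdvd
    exact ⟨k, by simp only; linarith⟩

lemma fourier_val_div_eq_stdAddChar (m : ℤ) (r : ZMod q) :
    fourier m ((r.val / q : ℝ) : UnitAddCircle) = ZMod.stdAddChar ((m : ZMod q) * r) := by
  have hr : (m : ZMod q) * r = ((m * r.val : ℤ) : ZMod q) := by
    rw [Int.cast_mul, Int.cast_natCast, ZMod.natCast_zmod_val]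
  rw [hr, ZMod.stdAddChar_coe, fourier_coe_apply]
  congr 1
  push_cast
  field_simp

lemma tsum_residue_eq (f : 𝓢(ℝ, ℂ)) {N : ℝ} (hN : 0 < N) (r : ZMod q) :
    ∑' x : ℤ, (if (x : ZMod q) = r then f (x / N) else 0) =
      (N / q : ℝ) * ∑' m : ℤ, 𝓕 f (m * (N / q)) * ZMod.stdAddChar ((m : ZMod q) * r) := by
  have hq : (0 : ℝ) < q := by exact_mod_cast Nat.pos_of_ne_zero (NeZero.ne q)
  have h := tsum_comp_mul_add_eq f (div_pos hq hN) (r.val / q)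
  simp only [fourier_val_div_eq_stdAddChar, inv_div] at h
  rw [tsum_ite_intCast_eq r fun x => f (x / N), ← h]
  refine tsum_congr fun k => congrArg f ?_
  push_cast
  field_simp

lemma prod_mul_sum_addChar_eq {ι R : Type*} [Fintype ι] [CommRing R] (ψ : AddChar R ℂ)
    (U : Finset (ι → R)) (g : ι → ℂ) (m : ι → R) :
    (∏ i, g i) * ∑ u ∈ U, ψ (m ⬝ᵥ u) = ∑ u ∈ U, ∏ i, g i * ψ (m i * u i) := by
  rw [Finset.mul_sum]
  refine Finset.sum_congr rfl fun u _ => ?_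
  rw [Finset.prod_mul_distrib, addChar_dotProduct]

lemma tsum_residues_eq (f : 𝓢(ℝ, ℂ)) {N : ℝ} (hN : 0 < N) (U : Finset (Fin k → ZMod q)) :
    ∑' x : Fin k → ℤ, (if (fun i => (x i : ZMod q)) ∈ U then ∏ i, f (x i / N) else 0) =
      (N / q : ℝ) ^ k * ∑' m : Fin k → ℤ, tensorVal (𝓕 f) (N / q) m *
        ∑ u ∈ U, ZMod.stdAddChar ((fun i => (m i : ZMod q)) ⬝ᵥ u) := by
  have hq : (q : ℝ) ≠ 0 := by exact_mod_cast NeZero.ne q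
  have hspace (r : ZMod q) : Summable fun x : ℤ => ‖if (x : ZMod q) = r then f (x / N) else 0‖ :=
    (summable_norm_schwartz_int_mul f (inv_ne_zero hN.ne')).of_nonneg_of_le
      (fun _ => norm_nonneg _) fun x => by
        split_ifs
        · rw [div_eq_mul_inv]
        · rw [norm_zero]
          exact norm_nonneg _
  have hfreq (r : ZMod q) : Summable fun m : ℤ =>
      ‖𝓕 f (m * (N / q)) * ZMod.stdAddChar ((m : ZMod q) * r)‖ := by
    simpa only [norm_mul, AddChar.norm_apply, mul_one] using
      summable_norm_schwartz_int_mul (𝓕 f) (div_ne_zero hN.ne' hq)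
  calc ∑' x : Fin k → ℤ, (if (fun i => (x i : ZMod q)) ∈ U then ∏ i, f (x i / N) else 0)
      = ∑ u ∈ U, ∏ i, ∑' x : ℤ, if (x : ZMod q) = u i then f (x / N) else 0 := by
        rw [← tsum_sum_prod_apply U hspace]
        exact tsum_congr fun x => ite_mem_eq_sum_prod U (fun t => f (t / N)) x
    _ = (N / q : ℝ) ^ k * ∑ u ∈ U, ∏ i, ∑' m : ℤ,
          𝓕 f (m * (N / q)) * ZMod.stdAddChar ((m : ZMod q) * u i) := by
        rw [Finset.mul_sum]
        refine Finset.sum_congr rfl fun u _ => ?_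
        simp_rw [tsum_residue_eq f hN]
        rw [Finset.prod_mul_distrib, Finset.prod_const, Finset.card_univ, Fintype.card_fin]
    _ = _ := by
        rw [← tsum_sum_prod_apply U hfreq]
        simp_rw [tensorVal, prod_mul_sum_addChar_eq]

lemma tsum_unitSols_eq (f : 𝓢(ℝ, ℂ)) {N : ℝ} (hN : 0 < N) (a : Fin 3 → ℤ) :
    (∑' x : Fin 3 → ℤ,
      if (fun i => (x i : ZMod q)) ∈ unitSols (fun i => (a i : ZMod q)) then
        ∏ i, f (x i / N) else 0) =
      (N / q : ℝ) ^ 3 * ∑' m : Fin 3 → ℤ, tensorVal (𝓕 f) (N / q) m * freqSum q a m :=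
  tsum_residues_eq f hN _

end Poisson

section FirstMoment

variable {p : ℕ} [Fact p.Prime]

lemma exists_eq_pow_smul_not_dvd {ι : Type*} [Finite ι] {m : ι → ℤ} (hm : m ≠ 0) :
    ∃ (j : ℕ) (y : ι → ℤ), m = (p : ℤ) ^ j • y ∧ ∃ i, ¬ (p : ℤ) ∣ y i := by
  have := Fintype.ofFinite ι
  have hp : Prime (p : ℤ) := prime_intCast
  obtain ⟨t, x, ht, hx, rfl⟩ := exists_pos_smul_isPrimVec hm
  obtain ⟨j, u, hu, rfl⟩ :=
    Nat.exists_eq_pow_mul_and_not_dvd ht.ne' p (Fact.out : p.Prime).ne_one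
  obtain ⟨i, hi⟩ := hx.exists_not_dvd hp.not_isUnit
  refine ⟨j, (u : ℤ) • x, by rw [smul_smul]; push_cast; rfl, i, fun h => ?_⟩
  exact (hp.dvd_or_dvd h).elim (fun h => hu (by exact_mod_cast h)) hi

variable {a m : Fin 3 → ℤ} {n r : ℕ}

lemma norm_freqSum_le_sum_pow (hp2 : p ≠ 2) (ha : ∀ i, ¬ (p : ℤ) ∣ a i) (hm : m ≠ 0)
    (hmr : height m ≤ p ^ r) :
    ‖freqSum (p ^ n) a m‖ ≤ (p : ℝ) ^ n * (p : ℝ) ^ (n - n / 2) * p *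
      ∑ j ∈ Finset.range (r + 1) with ∀ i, (p : ℤ) ^ j ∣ m i, (p : ℝ) ^ j := by
  obtain ⟨j, y, rfl, hy⟩ := exists_eq_pow_smul_not_dvd (p := p) hm
  have hj : j ≤ r := by
    rw [← Nat.pow_le_pow_iff_right (Fact.out : p.Prime).one_lt]
    have hy0 : 0 < height y := height_pos.2 (right_ne_zero_of_smul hm)
    rw [height_smul, Int.natAbs_pow, Int.natAbs_natCast] at hmr
    exact (Nat.le_mul_of_pos_right _ hy0).trans hmr
  have hmem : j ∈ ({l ∈ Finset.range (r + 1) | ∀ i, (p : ℤ) ^ l ∣ ((p : ℤ) ^ j • y) i} :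
      Finset ℕ) :=
    Finset.mem_filter.2 ⟨Finset.mem_range.2 (Nat.lt_succ_of_le hj), fun i => Dvd.intro _ rfl⟩
  calc ‖freqSum (p ^ n) a ((p : ℤ) ^ j • y)‖
      ≤ (p : ℝ) ^ n * (p : ℝ) ^ (n - n / 2) * (p : ℝ) ^ j * p :=
        norm_freqSum_pow_smul_le hp2 ha hy j
    _ = (p : ℝ) ^ n * (p : ℝ) ^ (n - n / 2) * p * (p : ℝ) ^ j := by ring
    _ ≤ _ := by
        gcongr
        exact Finset.single_le_sum (f := fun l => (p : ℝ) ^ l) (fun l _ => by positivity) hmem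

lemma sum_norm_freqSum_eq_sum_smallZeros (ha : ∀ i, ¬ (p : ℤ) ∣ a i) (hr : r * 2 ≤ n - 1) (M : ℕ) :
    ∑ m ∈ (box M).erase 0, ‖freqSum (p ^ n) a m‖ =
      ∑ m ∈ smallZeros (((p : ℤ) ^ r) ^ 2) (adjCoeff a) M, ‖freqSum (p ^ n) a m‖ := by
  refine (Finset.sum_subset (fun m hm => ?_) fun m hm hmZ => ?_).symm
  · obtain ⟨hle, hne, -⟩ := mem_smallZeros.1 hm
    exact Finset.mem_erase.2 ⟨hne, mem_box.2 hle⟩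
  · obtain ⟨hne, hmem⟩ := Finset.mem_erase.1 hm
    rw [norm_eq_zero]
    by_contra hE
    refine hmZ (mem_smallZeros.2 ⟨mem_box.1 hmem, hne, ?_⟩)
    rw [← pow_mul]
    exact (pow_dvd_pow _ hr).trans (pow_dvd_diagBilin_adjCoeff_of_freqSum_ne_zero ha hE)

lemma sum_norm_freqSum_le (hp2 : p ≠ 2) {K D : ℝ} {M : ℕ} (hK : 1 ≤ K) (hD : 0 ≤ D)
    (hprim : ∀ B ≤ M, PrimBound p K D B) (hr : r * 2 ≤ n - 1) (hM : K * M ≤ (p : ℝ) ^ r)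
    (ha : ∀ i, ¬ (p : ℤ) ∣ a i) :
    ∑ m ∈ (box M).erase 0, ‖freqSum (p ^ n) a m‖ ≤
      (p : ℝ) ^ n * (p : ℝ) ^ (n - n / 2) * p * ((r + 1) * (D * harmonic M * M)) := by
  have hMr : M ≤ p ^ r := by
    exact_mod_cast (le_mul_of_one_le_left (Nat.cast_nonneg M) hK).trans hM
  set c : ℝ := (p : ℝ) ^ n * (p : ℝ) ^ (n - n / 2) * p
  set Z := smallZeros (((p : ℤ) ^ r) ^ 2) (adjCoeff a) M
  calc ∑ m ∈ (box M).erase 0, ‖freqSum (p ^ n) a m‖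
      = ∑ m ∈ Z, ‖freqSum (p ^ n) a m‖ := sum_norm_freqSum_eq_sum_smallZeros ha hr M
    _ ≤ ∑ m ∈ Z, c * ∑ j ∈ Finset.range (r + 1) with ∀ i, (p : ℤ) ^ j ∣ m i, (p : ℝ) ^ j :=
        Finset.sum_le_sum fun m hm => by
          obtain ⟨hle, hne, -⟩ := mem_smallZeros.1 hm
          exact norm_freqSum_le_sum_pow hp2 ha hne (hle.trans hMr)
    _ = c * ∑ j ∈ Finset.range (r + 1),
          (Finset.card {m ∈ Z | ∀ i, (p : ℤ) ^ j ∣ m i} : ℝ) * (p : ℝ) ^ j := by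
        simp_rw [← Finset.mul_sum, Finset.sum_filter]
        rw [Finset.sum_comm]
        simp_rw [← Finset.sum_filter, Finset.sum_const, nsmul_eq_mul]
    _ ≤ c * ∑ _j ∈ Finset.range (r + 1), D * harmonic M * M := by
        refine mul_le_mul_of_nonneg_left (Finset.sum_le_sum fun j _ => ?_) (by positivity)
        exact card_filter_dvd_smallZeros_mul_pow_le (zero_le_one.trans hK) hD hprim
          (not_dvd_adjCoeff ha) hM j
    _ = c * ((r + 1) * (D * harmonic M * M)) := by
        rw [Finset.sum_const, Finset.card_range, nsmul_eq_mul, Nat.cast_succ]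

lemma norm_freqSum_le (q : ℕ) [NeZero q] (a m : Fin 3 → ℤ) :
    ‖freqSum q a m‖ ≤ (q : ℝ) ^ 3 := by
  refine (norm_sum_addChar_le_card _ _ _).trans ?_
  have h := Finset.card_le_univ (unitSols fun i => (a i : ZMod q))
  rw [Fintype.card_pi, Finset.prod_const, ZMod.card, Finset.card_univ, Fintype.card_fin] at h
  exact_mod_cast h

end FirstMoment

section Tail

lemma norm_tsum_sub_sum_le {α E : Type*} [NormedAddCommGroup E] [CompleteSpace E] {F : α → E}
    {g : α → ℝ} (S : Finset α) (hg : Summable g) (hg0 : ∀ x, 0 ≤ g x)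
    (hF : ∀ x ∉ S, ‖F x‖ ≤ g x) : ‖∑' x, F x - ∑ x ∈ S, F x‖ ≤ ∑' x, g x := by
  have hsum : Summable F := hg.of_norm_bounded_eventually
    (S.finite_toSet.subset fun x hx => by_contra fun hxS => hx (hF x hxS))
  rw [← hsum.sum_add_tsum_compl (s := S), add_sub_cancel_left]
  exact (tsum_of_norm_bounded (hg.subtype _).hasSum fun x => hF x x.2).trans
    (Summable.tsum_subtype_le g _ hg0 hg)

lemma summable_inv_one_add_int_sq : Summable fun m : ℤ => (1 + (m : ℝ) ^ 2)⁻¹ := by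
  refine (Real.summable_one_div_int_pow.2 one_lt_two).of_norm_bounded_eventually
    ((Set.finite_singleton 0).subset fun m hm => by_contra fun hm0 => hm ?_)
  have hm0 : (m : ℝ) ≠ 0 := Int.cast_ne_zero.2 hm0
  rw [Set.mem_ofPred_eq, Real.norm_of_nonneg (by positivity), one_div]
  gcongr
  linarith

variable {f : 𝓢(ℝ, ℂ)} {C δ : ℝ} {d : ℕ}

lemma prod_one_add_sq_le {m : Fin d → ℤ} (hm : m ≠ 0) :
    ∏ i, (1 + (m i : ℝ) ^ 2) ≤ 2 ^ d * (height m : ℝ) ^ (2 * d) := by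
  have hm1 : (1 : ℝ) ≤ height m := by exact_mod_cast height_pos.2 hm
  have hfactor (i : Fin d) : 1 + (m i : ℝ) ^ 2 ≤ 2 * (height m : ℝ) ^ 2 := by
    have hi : (m i : ℝ) ^ 2 ≤ (height m : ℝ) ^ 2 :=
      sq_le_sq.2 (by rw [Nat.abs_cast]; exact_mod_cast abs_le_height m i)
    nlinarith
  calc ∏ i, (1 + (m i : ℝ) ^ 2) ≤ ∏ _i : Fin d, 2 * (height m : ℝ) ^ 2 :=
        Finset.prod_le_prod (fun i _ => by positivity) fun i _ => hfactor i
    _ = _ := by rw [Finset.prod_const, Finset.card_univ, Fintype.card_fin, mul_pow, pow_mul]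

lemma prod_norm_le_pow_card {ι : Type*} (S : Finset ι) {g : ι → ℂ} {C : ℝ} (hg : ∀ i, ‖g i‖ ≤ C) :
    ∏ i ∈ S, ‖g i‖ ≤ C ^ S.card := by
  rw [← Finset.prod_const]
  exact Finset.prod_le_prod (fun i _ => norm_nonneg _) fun i _ => hg i

lemma norm_tensorVal_le (hC : ∀ t, ‖f t‖ ≤ C) (δ : ℝ) (m : Fin d → ℤ) :
    ‖tensorVal f δ m‖ ≤ C ^ d := by
  rw [tensorVal, norm_prod]
  simpa only [Finset.card_univ, Fintype.card_fin] using
    prod_norm_le_pow_card Finset.univ fun i => hC (m i * δ)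

lemma norm_tensorVal_le_div {l : ℕ} (hC : ∀ t, ‖f t‖ ≤ C) (hCl : ∀ t, |t| ^ l * ‖f t‖ ≤ C)
    (hδ : 0 < δ) {m : Fin d → ℤ} (hm : m ≠ 0) :
    ‖tensorVal f δ m‖ ≤ C ^ d / (δ * height m) ^ l := by
  have hpos : 0 < δ * height m := mul_pos hδ (by exact_mod_cast height_pos.2 hm)
  obtain ⟨i₀, -⟩ := Function.ne_iff.1 hm
  have : Nonempty (Fin d) := ⟨i₀⟩
  obtain ⟨i, hi⟩ := exists_natAbs_eq_height m
  have habs : |(m i : ℝ) * δ| = δ * height m := by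
    rw [abs_mul, abs_of_pos hδ, ← hi, Nat.cast_natAbs, Int.cast_abs, mul_comm]
  have hcoord : (δ * height m) ^ l * ‖f (m i * δ)‖ ≤ C := habs ▸ hCl (m i * δ)
  have hrest : ∏ j ∈ Finset.univ.erase i, ‖f (m j * δ)‖ ≤ C ^ (d - 1) := by
    simpa only [Finset.card_erase_of_mem (Finset.mem_univ i), Finset.card_univ, Fintype.card_fin]
      using prod_norm_le_pow_card (Finset.univ.erase i) fun j => hC (m j * δ)
  rw [le_div_iff₀' (by positivity), tensorVal, norm_prod,
    ← Finset.mul_prod_erase Finset.univ _ (Finset.mem_univ i), ← mul_assoc]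
  calc (δ * height m) ^ l * ‖f (m i * δ)‖ * ∏ j ∈ Finset.univ.erase i, ‖f (m j * δ)‖
      ≤ C * C ^ (d - 1) := by
        gcongr
        exact (norm_nonneg _).trans (hC 0)
    _ = C ^ d := mul_pow_sub_one (by rintro rfl; exact i.elim0) C

lemma norm_tensorVal_le_of_lt_height {s : ℕ} (hC : ∀ t, ‖f t‖ ≤ C)
    (hCs : ∀ t, |t| ^ (2 * d + s) * ‖f t‖ ≤ C) (hδ : 0 < δ) {M : ℕ} {m : Fin d → ℤ}
    (hm : M < height m) :
    ‖tensorVal f δ m‖ ≤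
      (2 * C) ^ d / (δ ^ (2 * d + s) * (M + 1) ^ s) * ∏ i, (1 + (m i : ℝ) ^ 2)⁻¹ := by
  have hm0 : m ≠ 0 := height_pos.1 (by lia)
  have hC0 : 0 ≤ C := (norm_nonneg _).trans (hC 0)
  have hM : (M : ℝ) + 1 ≤ height m := by exact_mod_cast hm
  have hh : (0 : ℝ) < height m := by exact_mod_cast height_pos.2 hm0
  have hprod : 0 < ∏ i, (1 + (m i : ℝ) ^ 2) := Finset.prod_pos fun i _ => by positivity
  have hweight : ((M : ℝ) + 1) ^ s * ∏ i, (1 + (m i : ℝ) ^ 2) ≤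
      2 ^ d * (height m : ℝ) ^ (2 * d + s) := by
    calc _ ≤ (height m : ℝ) ^ s * (2 ^ d * (height m : ℝ) ^ (2 * d)) := by
          gcongr
          exact prod_one_add_sq_le hm0
      _ = _ := by ring
  refine (norm_tensorVal_le_div hC hCs hδ hm0).trans ?_
  rw [Finset.prod_inv_distrib, ← div_eq_mul_inv, div_div,
    div_le_div_iff₀ (by positivity) (mul_pos (by positivity) hprod)]
  calc C ^ d * (δ ^ (2 * d + s) * ((M : ℝ) + 1) ^ s * ∏ i, (1 + (m i : ℝ) ^ 2))
      = C ^ d * δ ^ (2 * d + s) * (((M : ℝ) + 1) ^ s * ∏ i, (1 + (m i : ℝ) ^ 2)) := by ring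
    _ ≤ C ^ d * δ ^ (2 * d + s) * (2 ^ d * (height m : ℝ) ^ (2 * d + s)) := by gcongr
    _ = (2 * C) ^ d * (δ * height m) ^ (2 * d + s) := by ring

lemma norm_tsum_tensorVal_mul_sub_le {s : ℕ} (hC : ∀ t, ‖f t‖ ≤ C)
    (hCs : ∀ t, |t| ^ (2 * d + s) * ‖f t‖ ≤ C) (hδ : 0 < δ) (M : ℕ) {E : (Fin d → ℤ) → ℂ} {B : ℝ}
    (hE : ∀ m, ‖E m‖ ≤ B) :
    ‖∑' m, tensorVal f δ m * E m - tensorVal f δ (0 : Fin d → ℤ) * E 0‖ ≤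
      (2 * C) ^ d / (δ ^ (2 * d + s) * (M + 1) ^ s) * B * (∑' m : ℤ, (1 + (m : ℝ) ^ 2)⁻¹) ^ d +
        C ^ d * ∑ m ∈ (box M).erase 0, ‖E m‖ := by
  have hC0 : 0 ≤ C := (norm_nonneg _).trans (hC 0)
  have hB : 0 ≤ B := (norm_nonneg _).trans (hE 0)
  set A : ℝ := (2 * C) ^ d / (δ ^ (2 * d + s) * (M + 1) ^ s)
  set F : (Fin d → ℤ) → ℂ := fun m => tensorVal f δ m * E m with hF
  have hw : ∀ _ : Fin d, Summable fun x : ℤ => ‖(1 + (x : ℝ) ^ 2)⁻¹‖ :=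
    fun _ => summable_inv_one_add_int_sq.norm
  have htail : ‖∑' m, F m - ∑ m ∈ box M, F m‖ ≤
      A * B * (∑' m : ℤ, (1 + (m : ℝ) ^ 2)⁻¹) ^ d := by
    have hprod := tsum_prod_apply (f := fun (_ : Fin d) (x : ℤ) => (1 + (x : ℝ) ^ 2)⁻¹) hw
    rw [Finset.prod_const, Finset.card_univ, Fintype.card_fin] at hprod
    rw [← hprod, ← tsum_mul_left]
    refine norm_tsum_sub_sum_le _ ((summable_norm_prod_apply hw).of_norm.mul_left _)
      (fun m => by positivity) fun m hm => ?_
    rw [mem_box, not_le] at hm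
    rw [hF, norm_mul, mul_right_comm]
    gcongr
    exacts [norm_tensorVal_le_of_lt_height hC hCs hδ hm, hE m]
  have hbox : ‖∑ m ∈ (box M).erase 0, F m‖ ≤ C ^ d * ∑ m ∈ (box M).erase 0, ‖E m‖ := by
    rw [Finset.mul_sum]
    refine norm_sum_le_of_le _ fun m _ => ?_
    rw [hF, norm_mul]
    gcongr
    exact norm_tensorVal_le hC δ m
  have h0 : (0 : Fin d → ℤ) ∈ box M := mem_box.2 (by rw [height_eq_zero.2 rfl]; exact M.zero_le)
  have hsplit : ∑' m, F m - F 0 =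
      (∑' m, F m - ∑ m ∈ box M, F m) + ∑ m ∈ (box M).erase 0, F m := by
    rw [← Finset.add_sum_erase _ _ h0]
    ring
  calc ‖∑' m, F m - F 0‖
      ≤ ‖∑' m, F m - ∑ m ∈ box M, F m‖ + ‖∑ m ∈ (box M).erase 0, F m‖ :=
        hsplit ▸ norm_add_le _ _
    _ ≤ _ := add_le_add htail hbox

end Tail

section Asymptotics

lemma tendsto_one_add_log_sq_mul_rpow_neg {s : ℝ} (hs : 0 < s) :
    Tendsto (fun x : ℝ => (1 + Real.log x) ^ 2 * x ^ (-s)) atTop (nhds 0) := by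
  have hone : (fun _ : ℝ => (1 : ℝ)) =o[atTop] fun x : ℝ => x ^ (s / 2) :=
    (Asymptotics.isLittleO_const_left.2 <| Or.inr <|
      tendsto_norm_atTop_atTop.comp (tendsto_rpow_atTop (half_pos hs)))
  have hlog := (hone.add (isLittleO_log_rpow_atTop (half_pos hs))).pow two_pos
  refine hlog.tendsto_div_nhds_zero.congr' ?_
  filter_upwards [eventually_gt_atTop 0] with x hx
  rw [← Real.rpow_natCast (x ^ (s / 2)), ← Real.rpow_mul hx.le, div_eq_mul_inv,
    ← Real.rpow_neg hx.le, Nat.cast_two, div_mul_cancel₀ s two_ne_zero]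

lemma eventually_mul_one_add_log_sq_le_rpow {s : ℝ} (hs : 0 < s) (c : ℝ) :
    ∀ᶠ x : ℝ in atTop, c * (1 + Real.log x) ^ 2 ≤ x ^ s := by
  have hlt := ((tendsto_one_add_log_sq_mul_rpow_neg hs).const_mul c).eventually_lt_const
    ((mul_zero c).trans_lt one_pos)
  filter_upwards [hlt, eventually_gt_atTop 0] with x hlt hx
  rw [Real.rpow_neg hx.le, ← mul_assoc, ← div_eq_mul_inv, div_lt_one (by positivity)] at hlt
  exact hlt.le

lemma natCast_le_log_pow {b : ℝ} (hb : 3 ≤ b) (n : ℕ) : (n : ℝ) ≤ Real.log (b ^ n) := by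
  have hlog : 1 ≤ Real.log b :=
    (Real.le_log_iff_exp_le (by linarith)).2 (Real.exp_one_lt_three.le.trans hb)
  rw [Real.log_pow]
  exact le_mul_of_one_le_right n.cast_nonneg hlog

lemma exists_decay_bound (f : 𝓢(ℝ, ℂ)) (k : ℕ) :
    ∃ C, (∀ t, ‖f t‖ ≤ C) ∧ ∀ t, |t| ^ k * ‖f t‖ ≤ C := by
  obtain ⟨C₀, -, hC₀⟩ := f.decay 0 0
  obtain ⟨C, -, hC⟩ := f.decay k 0
  simp only [pow_zero, norm_iteratedFDeriv_zero, one_mul, Real.norm_eq_abs] at hC₀ hC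
  exact ⟨max C₀ C, fun t => (hC₀ t).trans (le_max_left _ _),
    fun t => (hC t).trans (le_max_right _ _)⟩

lemma sq_le_pow_mul_pow_of_rpow_le {q δ y ε : ℝ} {s : ℕ} (hq : 1 ≤ q) (hs : 10 ≤ s * ε)
    (hε : 0 ≤ ε) (hδ : q ^ (ε - 1 / 2) ≤ δ) (hy : q ^ (1 / 2 - ε / 2) ≤ y) :
    q ^ 2 ≤ δ ^ (2 * 3 + s) * y ^ s := by
  have hq0 : 0 < q := one_pos.trans_le hq
  have hδ0 : 0 ≤ δ := (Real.rpow_nonneg hq0.le _).trans hδ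
  calc q ^ 2 = q ^ (2 : ℝ) := (Real.rpow_two q).symm
    _ ≤ q ^ ((ε - 1 / 2) * (2 * 3 + s : ℕ) + (1 / 2 - ε / 2) * s) := by
        refine Real.rpow_le_rpow_of_exponent_le hq ?_
        push_cast
        linarith
    _ = (q ^ (ε - 1 / 2)) ^ (2 * 3 + s) * (q ^ (1 / 2 - ε / 2)) ^ s := by
        rw [Real.rpow_add hq0, Real.rpow_mul hq0.le, Real.rpow_mul hq0.le, Real.rpow_natCast,
          Real.rpow_natCast]
    _ ≤ δ ^ (2 * 3 + s) * y ^ s := by gcongr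

end Asymptotics

section NonzeroFrequencies

variable {p : ℕ} [Fact p.Prime]

lemma rpow_half_le_pow {b : ℝ} (hb : 1 ≤ b) {n k : ℕ} (h : n ≤ 2 * k) :
    (b ^ n) ^ (1 / 2 : ℝ) ≤ b ^ k := by
  rw [← Real.sqrt_eq_rpow, Real.sqrt_le_left (by positivity), ← pow_mul, mul_comm k]
  exact pow_le_pow_right₀ hb h

lemma pow_le_rpow_half_mul {b : ℝ} (hb : 1 ≤ b) {n k : ℕ} (h : 2 * k ≤ n + 2) :
    b ^ k ≤ (b ^ n) ^ (1 / 2 : ℝ) * b := by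
  rw [← Real.sqrt_eq_rpow, ← Real.sqrt_sq (zero_le_one.trans hb), ← Real.sqrt_mul (by positivity)]
  refine Real.le_sqrt_of_sq_le ?_
  rw [Real.sqrt_sq (zero_le_one.trans hb), ← pow_mul, ← pow_add, mul_comm k]
  exact pow_le_pow_right₀ hb h

lemma sum_norm_freqSum_le_of_log_le (hp2 : p ≠ 2) {K H : ℝ} {M n : ℕ} (hnH : n + 1 ≤ H)
    (hMH : harmonic M ≤ H) (hK : 240 * p ^ 3 * H ^ 2 ≤ K)
    (hM : K * M * p ≤ ((p : ℝ) ^ n) ^ (1 / 2 : ℝ)) {a : Fin 3 → ℤ} (ha : ∀ i, ¬ (p : ℤ) ∣ a i) :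
    ∑ m ∈ (box M).erase 0, ‖freqSum (p ^ n) a m‖ ≤
      4 * p ^ 6 * H ^ 2 * (p ^ n * ((p : ℝ) ^ n) ^ (1 / 2 : ℝ) * (K * M)) := by
  have hp3 : (3 : ℝ) ≤ p := by
    exact_mod_cast (Fact.out : p.Prime).two_le.lt_of_ne hp2.symm
  have hH1 : 1 ≤ H := (le_add_of_nonneg_left n.cast_nonneg).trans hnH
  have hK3 : 3 ≤ K := by
    nlinarith [one_le_pow₀ hH1 (n := 2), one_le_pow₀ (by linarith : (1 : ℝ) ≤ p) (n := 3)]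
  have hharm := harmonic_nonneg M
  have hprim := primBound_of_le (p := p) (M := M) hp2 hK3 <|
    calc 120 * (p : ℝ) ^ 3 * (harmonic M * (harmonic M + 1)) ≤ 120 * p ^ 3 * (H * (H + H)) := by
          gcongr
      _ = 240 * p ^ 3 * H ^ 2 := by ring
      _ ≤ K := hK
  have hKM : K * M ≤ (p : ℝ) ^ ((n - 1) / 2) := by
    refine le_of_mul_le_mul_right (hM.trans ?_) (by positivity : (0 : ℝ) < p)
    rw [← pow_succ]
    exact rpow_half_le_pow (by linarith) (by lia)
  have hr : (((n - 1) / 2 : ℕ) : ℝ) + 1 ≤ H := by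
    refine le_trans ?_ hnH
    gcongr
    lia
  have hhalf := pow_le_rpow_half_mul (by linarith : (1 : ℝ) ≤ p) (by lia : 2 * (n - n / 2) ≤ n + 2)
  calc ∑ m ∈ (box M).erase 0, ‖freqSum (p ^ n) a m‖
      ≤ p ^ n * (p : ℝ) ^ (n - n / 2) * p *
          ((((n - 1) / 2 : ℕ) + 1) * (4 * p ^ 4 * K * harmonic M * M)) :=
        sum_norm_freqSum_le hp2 (by linarith) (by positivity) hprim (Nat.div_mul_le_self _ _) hKM ha
    _ ≤ p ^ n * (((p : ℝ) ^ n) ^ (1 / 2 : ℝ) * p) * p * (H * (4 * p ^ 4 * K * H * M)) := by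
        gcongr
    _ = _ := by ring

lemma sum_norm_freqSum_floor_le (hp2 : p ≠ 2) {η : ℝ} (hη : 0 ≤ η) {n : ℕ}
    (hn : 240 * p ^ 3 * (1 + Real.log ((p : ℝ) ^ n)) ^ 2 ≤ ((p : ℝ) ^ n) ^ (η / 2))
    {a : Fin 3 → ℤ} (ha : ∀ i, ¬ (p : ℤ) ∣ a i) :
    ∑ m ∈ (box ⌊((p : ℝ) ^ n) ^ (1 / 2 - η)⌋₊).erase 0, ‖freqSum (p ^ n) a m‖ ≤
      ((p : ℝ) ^ n) ^ 2 *
        (4 * p ^ 6 * ((1 + Real.log ((p : ℝ) ^ n)) ^ 2 * ((p : ℝ) ^ n) ^ (-(η / 2)))) := by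
  have hp3 : (3 : ℝ) ≤ p := by
    exact_mod_cast (Fact.out : p.Prime).two_le.lt_of_ne hp2.symm
  have hnlog := natCast_le_log_pow hp3 n
  set q : ℝ := (p : ℝ) ^ n
  have hq1 : 1 ≤ q := one_le_pow₀ (by linarith)
  have hq0 : 0 < q := one_pos.trans_le hq1
  set M := ⌊q ^ (1 / 2 - η)⌋₊
  have hMH : (harmonic M : ℝ) ≤ 1 + Real.log q := by
    refine (harmonic_cast_le (Nat.floor_le_floor ?_)).trans (harmonic_floor_le_one_add_log q hq1)
    exact Real.rpow_le_self_of_one_le hq1 (by linarith)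
  have hKM : q ^ (η / 2) * M ≤ q ^ (1 / 2 - η / 2) := by
    calc q ^ (η / 2) * M ≤ q ^ (η / 2) * q ^ (1 / 2 - η) := by
          gcongr
          exact Nat.floor_le (by positivity)
      _ = q ^ (1 / 2 - η / 2) := by rw [← Real.rpow_add hq0]; ring_nf
  have hpK : (p : ℝ) ≤ q ^ (η / 2) := by
    refine le_trans ?_ hn
    nlinarith [one_le_pow₀ (le_add_of_nonneg_right (Real.log_nonneg hq1)) (n := 2),
      le_self_pow₀ (by linarith : (1 : ℝ) ≤ p) three_ne_zero]
  have hKMp : q ^ (η / 2) * M * p ≤ q ^ (1 / 2 : ℝ) := by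
    calc q ^ (η / 2) * M * p ≤ q ^ (1 / 2 - η / 2) * q ^ (η / 2) := by gcongr
      _ = q ^ (1 / 2 : ℝ) := by rw [← Real.rpow_add hq0, sub_add_cancel]
  have hexp : q * q ^ (1 / 2 : ℝ) * q ^ (1 / 2 - η / 2) = q ^ 2 * q ^ (-(η / 2)) := by
    rw [mul_assoc, ← Real.rpow_add hq0, (by ring : 1 / 2 + (1 / 2 - η / 2) = 1 + -(η / 2)),
      Real.rpow_add hq0, Real.rpow_one, sq, mul_assoc]
  calc ∑ m ∈ (box M).erase 0, ‖freqSum (p ^ n) a m‖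
      ≤ 4 * p ^ 6 * (1 + Real.log q) ^ 2 * (q * q ^ (1 / 2 : ℝ) * (q ^ (η / 2) * M)) :=
        sum_norm_freqSum_le_of_log_le hp2 (by linarith) hMH hn hKMp ha
    _ ≤ 4 * p ^ 6 * (1 + Real.log q) ^ 2 * (q * q ^ (1 / 2 : ℝ) * q ^ (1 / 2 - η / 2)) := by
        gcongr
    _ = q ^ 2 * (4 * p ^ 6 * ((1 + Real.log q) ^ 2 * q ^ (-(η / 2)))) := by
        rw [hexp]
        ring

lemma exists_tendsto_norm_tsum_sub_le (hp2 : p ≠ 2) (f : 𝓢(ℝ, ℂ)) {ε : ℝ} (hε : 0 < ε) :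
    ∃ err : ℝ → ℝ, Tendsto err atTop (nhds 0) ∧ ∀ᶠ n : ℕ in atTop,
      ∀ a : Fin 3 → ℤ, (∀ i, ¬ (p : ℤ) ∣ a i) → ∀ δ : ℝ, ((p : ℝ) ^ n) ^ (ε - 1 / 2) ≤ δ →
        ‖∑' m, tensorVal f δ m * freqSum (p ^ n) a m -
          tensorVal f δ (0 : Fin 3 → ℤ) * freqSum (p ^ n) a 0‖ ≤
            ((p : ℝ) ^ n) ^ 2 * err ((p : ℝ) ^ n) := by
  have hlog := tendsto_one_add_log_sq_mul_rpow_neg (half_pos (half_pos hε))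
  have hq : Tendsto (fun n : ℕ => (p : ℝ) ^ n) atTop atTop :=
    tendsto_pow_atTop_atTop_of_one_lt (by exact_mod_cast (Fact.out : p.Prime).one_lt)
  obtain ⟨s, hs⟩ := exists_nat_ge (10 / ε)
  obtain ⟨C, hC, hCs⟩ := exists_decay_bound f (2 * 3 + s)
  have hC0 : 0 ≤ C := (norm_nonneg _).trans (hC 0)
  set W : ℝ := ∑' m : ℤ, (1 + (m : ℝ) ^ 2)⁻¹
  have : 0 ≤ W := tsum_nonneg fun m => by positivity
  refine ⟨fun q => (2 * C) ^ 3 * W ^ 3 * q⁻¹ +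
    C ^ 3 * (4 * p ^ 6 * ((1 + Real.log q) ^ 2 * q ^ (-(ε / 2 / 2)))), ?_, ?_⟩
  · simpa only [mul_zero, add_zero] using (tendsto_inv_atTop_zero.const_mul _).add
      ((hlog.const_mul (4 * (p : ℝ) ^ 6)).const_mul (C ^ 3))
  have hlarge := eventually_mul_one_add_log_sq_le_rpow (half_pos (half_pos hε)) (240 * (p : ℝ) ^ 3)
  filter_upwards [hq.eventually hlarge, hq.eventually_ge_atTop 1] with n hn hq1 a ha δ hδ
  have hδ0 : 0 < δ := (by positivity : (0 : ℝ) < _).trans_le hδ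
  refine (norm_tsum_tensorVal_mul_sub_le hC hCs hδ0 ⌊((p : ℝ) ^ n) ^ (1 / 2 - ε / 2)⌋₊
    (norm_freqSum_le (p ^ n) a)).trans ?_
  have hbox := sum_norm_freqSum_floor_le hp2 (half_pos hε).le hn ha
  have hdecay := sq_le_pow_mul_pow_of_rpow_le hq1 ((div_le_iff₀ hε).1 hs) hε.le hδ
    (Nat.lt_floor_add_one _).le
  rw [Nat.cast_pow]
  set q : ℝ := (p : ℝ) ^ n
  set M := ⌊q ^ (1 / 2 - ε / 2)⌋₊
  set Y : ℝ := δ ^ (2 * 3 + s) * (M + 1) ^ s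
  set S : ℝ := (1 + Real.log q) ^ 2 * q ^ (-(ε / 2 / 2))
  calc (2 * C) ^ 3 / Y * q ^ 3 * W ^ 3 + C ^ 3 * ∑ m ∈ (box M).erase 0, ‖freqSum (p ^ n) a m‖
      ≤ (2 * C) ^ 3 / q ^ 2 * q ^ 3 * W ^ 3 + C ^ 3 * (q ^ 2 * (4 * p ^ 6 * S)) := by gcongr
    _ = q ^ 2 * ((2 * C) ^ 3 * W ^ 3 * q⁻¹ + C ^ 3 * (4 * p ^ 6 * S)) := by field_simp

end NonzeroFrequencies

section SmoothedCount

lemma tsum_prod_prod_eq_tsum_fin_three {α E : Type*} [AddCommMonoid E] [TopologicalSpace E]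
    (g : α × α × α → E) : ∑' x, g x = ∑' x : Fin 3 → α, g (x 0, x 1, x 2) :=
  (((Fin.consEquiv fun _ => α).symm.trans
    ((Equiv.refl α).prodCongr (finTwoArrowEquiv α))).tsum_eq g).symm

variable {p : ℕ} [Fact p.Prime] {n : ℕ}

lemma isUnit_intCast_zmod_pow_iff (hn : n ≠ 0) (u : ℤ) :
    IsUnit (u : ZMod (p ^ n)) ↔ ¬ (p : ℤ) ∣ u := by
  rw [← isUnit_redHom_iff hn, map_intCast, isUnit_iff_ne_zero, ne_eq,
    ZMod.intCast_zmod_eq_zero_iff_dvd]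

lemma gcd_mul_mul_eq_one_iff (x : Fin 3 → ℤ) :
    Int.gcd (x 0 * x 1 * x 2) p = 1 ↔ ∀ i, ¬ (p : ℤ) ∣ x i := by
  rw [← Int.isCoprime_iff_gcd_eq_one, isCoprime_comm, prime_intCast.coprime_iff_not_dvd,
    ← Fin.prod_univ_three, prime_intCast.dvd_finsetProd_iff]
  simp only [Finset.mem_univ, true_and, not_exists]

lemma mem_unitSols_intCast_iff (hn : n ≠ 0) (a x : Fin 3 → ℤ) :
    (fun i => (x i : ZMod (p ^ n))) ∈ unitSols (fun i => (a i : ZMod (p ^ n))) ↔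
      Int.gcd (x 0 * x 1 * x 2) p = 1 ∧
        (p : ℤ) ^ n ∣ a 0 * x 0 ^ 2 + a 1 * x 1 ^ 2 + a 2 * x 2 ^ 2 := by
  have hQ : diagBilin (fun i => (a i : ZMod (p ^ n))) (fun i => (x i : ZMod (p ^ n)))
      (fun i => (x i : ZMod (p ^ n))) =
        ((a 0 * x 0 ^ 2 + a 1 * x 1 ^ 2 + a 2 * x 2 ^ 2 : ℤ) : ZMod (p ^ n)) := by
    rw [diagBilin_apply, Fin.sum_univ_three]
    push_cast
    ring
  rw [mem_unitSols, gcd_mul_mul_eq_one_iff, hQ, ZMod.intCast_zmod_eq_zero_iff_dvd, Nat.cast_pow]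
  simp only [isUnit_intCast_zmod_pow_iff hn]

lemma freqSum_zero (q : ℕ) [NeZero q] (a : Fin 3 → ℤ) :
    freqSum q a 0 = (unitSols fun i => (a i : ZMod q)).card := by
  have h0 : (fun i => ((0 : Fin 3 → ℤ) i : ZMod q)) = 0 := funext fun _ => Int.cast_zero
  simp only [freqSum, unitExpSum, h0, zero_dotProduct, AddChar.map_zero_eq_one, Finset.sum_const,
    nsmul_eq_mul, mul_one]

lemma tensorVal_fourier_zero {ι : Type*} [Fintype ι] (Φ : 𝓢(ℝ, ℝ)) (δ : ℝ) :
    tensorVal (𝓕 (Φ.postcompCLM Complex.ofRealCLM)) δ (0 : ι → ℤ) =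
      ((∫ x, Φ x : ℝ) : ℂ) ^ Fintype.card ι := by
  have h : 𝓕 (Φ.postcompCLM Complex.ofRealCLM) 0 = ((∫ x, Φ x : ℝ) : ℂ) := by
    rw [SchwartzMap.fourier_coe, Real.fourier_real_eq, ← integral_complex_ofReal]
    simp
  simp [tensorVal, h]

lemma tsum_smoothed_eq (hn : n ≠ 0) (Φ : 𝓢(ℝ, ℝ)) {N : ℝ} (hN : 0 < N) (a : Fin 3 → ℤ) :
    ((∑' x : ℤ × ℤ × ℤ, (if Int.gcd (x.1 * x.2.1 * x.2.2) p = 1 ∧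
        (p : ℤ) ^ n ∣ a 0 * x.1 ^ 2 + a 1 * x.2.1 ^ 2 + a 2 * x.2.2 ^ 2
      then Φ ((x.1 : ℝ) / N) * Φ ((x.2.1 : ℝ) / N) * Φ ((x.2.2 : ℝ) / N) else 0) : ℝ) : ℂ) =
      (N / (p : ℝ) ^ n : ℝ) ^ 3 * ∑' m, tensorVal (𝓕 (Φ.postcompCLM Complex.ofRealCLM))
        (N / (p : ℝ) ^ n) m * freqSum (p ^ n) a m := by
  have hpoisson := tsum_unitSols_eq (q := p ^ n) (Φ.postcompCLM Complex.ofRealCLM) hN a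
  rw [Nat.cast_pow] at hpoisson
  rw [tsum_prod_prod_eq_tsum_fin_three, Complex.ofReal_tsum, ← hpoisson]
  refine tsum_congr fun x => ?_
  simp only [mem_unitSols_intCast_iff hn, Fin.prod_univ_three, SchwartzMap.postcompCLM_apply,
    Complex.ofRealCLM_apply, apply_ite Complex.ofReal, Complex.ofReal_mul, Complex.ofReal_zero]

lemma card_unitSols_div_sq (hp2 : p ≠ 2) (hn : n ≠ 0) {a : Fin 3 → ℤ}
    (ha : ∀ i, ¬ (p : ℤ) ∣ a i) :
    ((unitSols fun i => (a i : ZMod (p ^ n))).card : ℝ) / ((p : ℝ) ^ n) ^ 2 =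
      ((p : ℝ) - ((2 + legendreSym p (-(a 0 * a 1)) + legendreSym p (-(a 0 * a 2))
        + legendreSym p (-(a 1 * a 2)) : ℤ) : ℝ)) * ((p : ℝ) - 1) / (p : ℝ) ^ 2 := by
  have hp0 : (p : ℝ) ≠ 0 := by exact_mod_cast (Fact.out : p.Prime).ne_zero
  have hcard := congrArg (Int.cast : ℤ → ℝ) (card_unitSols_intCast hp2 hn ha)
  rw [Int.cast_natCast] at hcard
  rw [hcard, ← pow_sub_one_mul hn (p : ℝ)]
  push_cast
  field_simp

lemma abs_smoothed_sub_eq (hp2 : p ≠ 2) (hn : n ≠ 0) (Φ : 𝓢(ℝ, ℝ)) {N : ℝ} (hN : 0 < N)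
    {a : Fin 3 → ℤ} (ha : ∀ i, ¬ (p : ℤ) ∣ a i) :
    |((p : ℝ) ^ n / N ^ 3) * (∑' x : ℤ × ℤ × ℤ, (if Int.gcd (x.1 * x.2.1 * x.2.2) p = 1 ∧
        (p : ℤ) ^ n ∣ a 0 * x.1 ^ 2 + a 1 * x.2.1 ^ 2 + a 2 * x.2.2 ^ 2
      then Φ ((x.1 : ℝ) / N) * Φ ((x.2.1 : ℝ) / N) * Φ ((x.2.2 : ℝ) / N) else 0)) -
        (∫ x : ℝ, Φ x) ^ 3 *
          (((p : ℝ) - ((2 + legendreSym p (-(a 0 * a 1)) + legendreSym p (-(a 0 * a 2))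
              + legendreSym p (-(a 1 * a 2)) : ℤ) : ℝ)) * ((p : ℝ) - 1) / (p : ℝ) ^ 2)| =
    (((p : ℝ) ^ n) ^ 2)⁻¹ * ‖∑' m,
        tensorVal (𝓕 (Φ.postcompCLM Complex.ofRealCLM)) (N / (p : ℝ) ^ n) m * freqSum (p ^ n) a m -
      tensorVal (𝓕 (Φ.postcompCLM Complex.ofRealCLM)) (N / (p : ℝ) ^ n) (0 : Fin 3 → ℤ) *
        freqSum (p ^ n) a 0‖ := by
  have hp0 : (p : ℂ) ≠ 0 := by exact_mod_cast (Fact.out : p.Prime).ne_zero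
  have hN0 : (N : ℂ) ≠ 0 := Complex.ofReal_ne_zero.2 hN.ne'
  have hq : (((p : ℝ) ^ n) ^ 2)⁻¹ = ‖(((p : ℂ) ^ n) ^ 2)⁻¹‖ := by
    rw [norm_inv, norm_pow, norm_pow, Complex.norm_natCast]
  rw [← card_unitSols_div_sq hp2 hn ha, hq, ← norm_mul, tensorVal_fourier_zero, freqSum_zero,
    Fintype.card_fin, ← Real.norm_eq_abs, ← Complex.norm_real, Complex.ofReal_sub,
    Complex.ofReal_mul, tsum_smoothed_eq hn Φ hN a]
  congr 1
  push_cast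
  field_simp

end SmoothedCount

theorem smoothed_count_varying_coefficients_general
    (ε : ℝ) (hε : 0 < ε) (p : ℕ) [Fact p.Prime] (hp2 : p ≠ 2)
    (Φ : SchwartzMap ℝ ℝ) (α₁ α₂ α₃ : ℕ → ℤ)
    (h1 : ∀ n : ℕ, ¬ (p : ℤ) ∣ α₁ n) (h2 : ∀ n : ℕ, ¬ (p : ℤ) ∣ α₂ n)
    (h3 : ∀ n : ℕ, ¬ (p : ℤ) ∣ α₃ n)
    (N : ℕ → ℝ) (hN : ∀ n : ℕ, ((p : ℝ) ^ n) ^ ((1 : ℝ) / 2 + ε) ≤ N n) :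
    Tendsto (fun n : ℕ =>
        ((p : ℝ) ^ n / (N n) ^ 3) *
          (∑' x : ℤ × ℤ × ℤ,
            (if Int.gcd (x.1 * x.2.1 * x.2.2) p = 1 ∧
                (p : ℤ) ^ n ∣ α₁ n * x.1 ^ 2 + α₂ n * x.2.1 ^ 2 + α₃ n * x.2.2 ^ 2
             then Φ ((x.1 : ℝ) / N n) * Φ ((x.2.1 : ℝ) / N n) * Φ ((x.2.2 : ℝ) / N n)
             else 0)) -
        (∫ x : ℝ, Φ x) ^ 3 *
          (((p : ℝ) - ((2 + legendreSym p (-(α₁ n * α₂ n)) + legendreSym p (-(α₁ n * α₃ n))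
              + legendreSym p (-(α₂ n * α₃ n)) : ℤ) : ℝ)) * ((p : ℝ) - 1) / (p : ℝ) ^ 2))
      atTop (nhds 0) := by
  have hp1 : (1 : ℝ) < p := by exact_mod_cast (Fact.out : p.Prime).one_lt
  obtain ⟨err, herr, hbound⟩ := exists_tendsto_norm_tsum_sub_le hp2
    (𝓕 (Φ.postcompCLM Complex.ofRealCLM)) hε
  refine squeeze_zero_norm' ?_ (herr.comp (tendsto_pow_atTop_atTop_of_one_lt hp1))
  filter_upwards [hbound, eventually_ne_atTop 0] with n hn hn0
  have hq : (0 : ℝ) < (p : ℝ) ^ n := by positivity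
  have ha : ∀ i, ¬ (p : ℤ) ∣ ![α₁ n, α₂ n, α₃ n] i :=
    Fin.forall_fin_succ.2 ⟨h1 n, Fin.forall_fin_two.2 ⟨h2 n, h3 n⟩⟩
  have hδ : ((p : ℝ) ^ n) ^ (ε - 1 / 2) ≤ N n / (p : ℝ) ^ n := by
    rw [le_div_iff₀ hq, ← Real.rpow_add_one hq.ne']
    exact (congrArg _ (by ring)).trans_le (hN n)
  have hNpos : 0 < N n := (by positivity : (0 : ℝ) < _).trans_le (hN n)
  refine (abs_smoothed_sub_eq hp2 hn0 Φ hNpos ha).trans_le ?_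
  rw [inv_mul_le_iff₀ (by positivity)]
  exact hn _ ha _ hδ

/-- For coefficients allowed to vary with `n`, the difference between the
normalized smoothed count of unit solutions of
`α₁(n)x₁² + α₂(n)x₂² + α₃(n)x₃² ≡ 0 (mod pⁿ)` and `Φ̂(0)³ · C_p(α₁(n),α₂(n),α₃(n))`
tends to `0` as `n → ∞`, provided `N ≥ q^{11/18+ε}`. -/
theorem smoothed_count_varying_coefficients
    (ε : ℝ) (hε : 0 < ε) (p : ℕ) [hp : Fact p.Prime] (hp2 : 2 < p)
    (Φ : SchwartzMap ℝ ℝ) (hΦ : ∀ x, 0 ≤ Φ x)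
    (α₁ α₂ α₃ : ℕ → ℤ)
    (h1 : ∀ n : ℕ, ¬ (p : ℤ) ∣ α₁ n) (h2 : ∀ n : ℕ, ¬ (p : ℤ) ∣ α₂ n)
    (h3 : ∀ n : ℕ, ¬ (p : ℤ) ∣ α₃ n)
    (hs : ∀ n : ℕ, (2 + legendreSym p (-(α₁ n * α₂ n)) + legendreSym p (-(α₁ n * α₃ n))
            + legendreSym p (-(α₂ n * α₃ n))) < (p : ℤ))
    (N : ℕ → ℝ) (hN : ∀ n : ℕ, ((p : ℝ) ^ n) ^ ((11 : ℝ) / 18 + ε) ≤ N n) :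
    Tendsto (fun n : ℕ =>
        ((p : ℝ) ^ n / (N n) ^ 3) *
          (∑' x : ℤ × ℤ × ℤ,
            (if Int.gcd (x.1 * x.2.1 * x.2.2) p = 1 ∧
                (p : ℤ) ^ n ∣ α₁ n * x.1 ^ 2 + α₂ n * x.2.1 ^ 2 + α₃ n * x.2.2 ^ 2
             then Φ ((x.1 : ℝ) / N n) * Φ ((x.2.1 : ℝ) / N n) * Φ ((x.2.2 : ℝ) / N n)
             else 0)) -
        (∫ x : ℝ, Φ x) ^ 3 *
          (((p : ℝ) - ((2 + legendreSym p (-(α₁ n * α₂ n)) + legendreSym p (-(α₁ n * α₃ n))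
              + legendreSym p (-(α₂ n * α₃ n)) : ℤ) : ℝ)) * ((p : ℝ) - 1) / (p : ℝ) ^ 2))
      atTop (nhds 0) :=
  smoothed_count_varying_coefficients_general (1 / 9 + ε) (by positivity) p hp2.ne' Φ α₁ α₂ α₃
    h1 h2 h3 N fun n => (congrArg _ (by ring)).trans_le (hN n)
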